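/- arXiv:2109.13552 — 2 statements merged into one kernel-verified Lean document; each statement's English description precedes it below -/
import Mathlib

section
/- Let d ≥ 2, let D ∈ ℂ[t] be squarefree of degree 2d, let (A,B) be a solution of the Pell–Abel equation for D, and set n = deg A. Let m ≥ 1 be a divisor of n with n/m ≥ d. Then the following are equivalent: (i) (A,B) is an m-th power, i.e., there exists a solution (A′,B′) of the Pell–Abel equation for D such that A = T_m(A′) or A = −T_m(A′); (ii) the monodromy group Mon(A²), acting on the 2n roots of A(Y)² − x, preserves some partition of the set of roots into 2m blocks each of cardinality n/m. -/
open Polynomial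

/-- The polynomial `A(Y)² - x` over the rational function field `ℂ(x)`, whose splitting
field carries the monodromy (Galois) action for the cover given by `A²`. -/
noncomputable def pellCover (A : Polynomial ℂ) : Polynomial (RatFunc ℂ) :=
  (A ^ 2).map (algebraMap ℂ (RatFunc ℂ)) - Polynomial.C RatFunc.X

/-
Blocks of the monodromy group of `f` correspond to decompositions `f = g ∘ h`: if `y` lies in a
block, the product of the block is fixed by the stabilizer of `y` and integral over `K[y]`, hence is
a polynomial `h(y)`, and `h` serves all blocks by transitivity. Comparing `∏ h(z)` with `(∏ z) ^ k`
over all roots `z` gives `deg h = k`; since both `h` and `f` are constant on a block, dividing `f`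
by `h - h(y)` shows that `f` is a polynomial in `h`. Conversely the fibres of `h` are blocks.

For `f = A² = g ∘ h` the Pell–Abel equation reads `(g - 1) ∘ h = D B²`. As `D` is squarefree with
`deg D ≤ 2 deg h`, counting critical points of `h` shows that the squarefree part of `g - 1` has
degree two, so that it is a multiple of `M² - 1` with `M` affine. Then `M ∘ h` solves the Pell–Abel
equation for `D`, and `A² - ((M ∘ h)² - 1) H² = 1` for some `H`; degree descent in this last
equation yields `A = ± T_m (M ∘ h)`.
-/

theorem exists_squarefree_mul_sq {M : Type*} [CommMonoidWithZero M] [WfDvdMonoid M] {a : M}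
    (ha : a ≠ 0) : ∃ s r : M, Squarefree s ∧ a = s * r ^ 2 := by
  induction a using (wellFounded_dvdNotUnit (α := M)).induction with
  | _ a ih =>
    by_cases hs : Squarefree a
    · exact ⟨a, 1, hs, by simp⟩
    · simp only [Squarefree, not_forall] at hs
      obtain ⟨x, ⟨b, rfl⟩, hx⟩ := hs
      have hb : b ≠ 0 := right_ne_zero_of_mul ha
      have hlt : DvdNotUnit b (x * x * b) :=
        ⟨hb, x * x, fun h => hx (isUnit_of_mul_isUnit_left h), mul_comm _ _⟩
      obtain ⟨s, r, hs, rfl⟩ := ih b hlt hb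
      exact ⟨s, x * r, hs, by rw [mul_pow, mul_left_comm, sq x]⟩

theorem exists_eq_mul_sq_of_mul_sq_eq {R : Type*} [CommRing R] [IsDomain R]
    [UniqueFactorizationMonoid R] {d b e f : R} (hd : Squarefree d) (hf : f ≠ 0)
    (h : d * b ^ 2 = e * f ^ 2) : ∃ k, e = d * k ^ 2 := by
  obtain ⟨k, hk⟩ : f ∣ d * b :=
    (IsIntegrallyClosed.pow_dvd_pow_iff two_ne_zero).1 ⟨d * e, by linear_combination d * h⟩
  have hk_sq : k ^ 2 = d * e :=
    mul_left_cancel₀ (pow_ne_zero 2 hf) (by linear_combination d * h - (d * b + f * k) * hk)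
  obtain ⟨l, rfl⟩ : d ∣ k := (hd.dvd_pow_iff_dvd two_ne_zero).1 ⟨e, hk_sq⟩
  exact ⟨l, mul_left_cancel₀ hd.ne_zero (by rw [← hk_sq]; ring)⟩

theorem dvd_derivative_of_sq_dvd_comp {R : Type*} [CommRing R] {S h k : R[X]} (hS : S.Separable)
    (hk : k ^ 2 ∣ S.comp h) : k ∣ derivative h := by
  have hcoprime : IsCoprime (S.comp h) ((derivative S).comp h) := by
    simpa only [coe_compRingHom_apply] using IsCoprime.map hS (compRingHom h)
  have hdvd : k ∣ derivative h * (derivative S).comp h := by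
    simpa [derivative_comp] using pow_sub_one_dvd_derivative_of_pow_dvd hk
  exact (hcoprime.of_isCoprime_of_dvd_left
    ((dvd_pow_self k two_ne_zero).trans hk)).dvd_of_dvd_mul_right hdvd

theorem natDegree_lt_of_sq_dvd_comp {K : Type*} [Field K] [CharZero K] {S h k : K[X]}
    (hS : Squarefree S) (hh : h.natDegree ≠ 0) (hk : k ^ 2 ∣ S.comp h) :
    k.natDegree < h.natDegree := by
  have hne : derivative h ≠ 0 := mt derivative_eq_zero.1 hh
  exact (natDegree_le_of_dvd (dvd_derivative_of_sq_dvd_comp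
    (PerfectField.separable_iff_squarefree.2 hS) hk) hne).trans_lt (natDegree_derivative_lt hh)

theorem exists_eq_sq_mul_sq_sub_one {K : Type*} [Field K] [IsAlgClosed K] [NeZero (2 : K)]
    {S : K[X]} (hS : Squarefree S) (hdeg : S.natDegree = 2) :
    ∃ (a : K) (M : K[X]), a ≠ 0 ∧ M.natDegree = 1 ∧ S = C a ^ 2 * (M ^ 2 - 1) := by
  have hsplits := IsAlgClosed.splits S
  obtain ⟨v, w, hroots⟩ : ∃ v w, S.roots = {v, w} :=
    Multiset.card_eq_two.1 (hdeg ▸ splits_iff_card_roots.1 hsplits)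
  have hvw : v - w ≠ 0 := by
    have hnodup := nodup_roots (PerfectField.separable_iff_squarefree.2 hS)
    rw [hroots] at hnodup
    simpa [sub_eq_zero] using hnodup
  obtain ⟨l, hl⟩ := IsAlgClosed.exists_pow_nat_eq S.leadingCoeff (n := 2) two_pos
  have hl0 : l ≠ 0 := by
    rintro rfl
    exact leadingCoeff_ne_zero.2 hS.ne_zero (by simpa using hl.symm)
  have h2 : (2 : K) ≠ 0 := NeZero.ne 2
  obtain ⟨u, hu⟩ : ∃ u, u * (v - w) = 2 := ⟨2 / (v - w), div_mul_cancel₀ 2 hvw⟩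
  have hu0 : u ≠ 0 := left_ne_zero_of_mul (hu ▸ h2)
  have hMw : C u * (X - C v) + 2 = C u * (X - C w) := by
    rw [← C_ofNat, ← hu, C_mul, C_sub]; ring
  refine ⟨l / u, C u * (X - C v) + 1, div_ne_zero hl0 hu0, ?_, ?_⟩
  · rw [← C_1, natDegree_add_C, natDegree_C_mul hu0, natDegree_X_sub_C]
  · have hlu : C (l / u) * C u = C l := by rw [← C_mul, div_mul_cancel₀ l hu0]
    calc S = C (l ^ 2) * ((X - C v) * (X - C w)) := by
          conv_lhs => rw [hsplits.eq_prod_roots, hroots, ← hl]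
          simp
      _ = C (l / u) ^ 2 * ((C u * (X - C v)) * (C u * (X - C w))) := by
          rw [C_pow, ← hlu]; ring
      _ = C (l / u) ^ 2 * ((C u * (X - C v) + 1) ^ 2 - 1) := by
          rw [← hMw]; ring

theorem degree_mul_sub_lt_or_degree_mul_add_lt {R : Type*} [CommRing R] [IsDomain R]
    [NeZero (2 : R)] {G H M : R[X]} (hM : M.natDegree ≠ 0) (hH : H ≠ 0)
    (h : G ^ 2 - (M ^ 2 - 1) * H ^ 2 = 1) :
    (M * H - G).degree < H.degree ∨ (M * H + G).degree < H.degree := by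
  by_contra! hge
  have hprod : (M * H - G).degree + (M * H + G).degree ≤ H.degree + H.degree := by
    rw [← degree_mul, ← degree_mul,
      show (M * H - G) * (M * H + G) = H * H - 1 by linear_combination -h]
    refine (degree_sub_le _ _).trans (max_le le_rfl ?_)
    rw [degree_one]
    exact zero_le_degree_iff.2 (mul_ne_zero hH hH)
  have hM2 : (0 : WithBot ℕ) < (C 2 * M).degree := by
    rw [degree_C_mul (NeZero.ne (2 : R))]
    exact natDegree_pos_iff_degree_pos.1 (Nat.pos_of_ne_zero hM)
  have hbot : H.degree ≠ ⊥ := degree_ne_bot.2 hH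
  have hmax : H.degree < max (M * H - G).degree (M * H + G).degree := calc
    H.degree < (C 2 * M * H).degree := by
      rw [degree_mul (p := C 2 * M)]
      simpa only [zero_add] using WithBot.add_lt_add_right hbot hM2
    _ = ((M * H - G) + (M * H + G)).degree := by rw [C_ofNat]; ring_nf
    _ ≤ max (M * H - G).degree (M * H + G).degree := degree_add_le _ _
  rcases lt_max_iff.1 hmax with hlt | hlt
  · exact (WithBot.add_lt_add_of_lt_of_le hbot hlt hge.2).not_ge hprod
  · exact (WithBot.add_lt_add_of_le_of_lt hbot hge.1 hlt).not_ge hprod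

open Chebyshev in
theorem exists_eq_mul_chebyshev_comp {R : Type*} [CommRing R] [IsDomain R]
    [NeZero (2 : R)] {G H M : R[X]} (hM : M.natDegree ≠ 0)
    (h : G ^ 2 - (M ^ 2 - 1) * H ^ 2 = 1) :
    ∃ (j : ℤ) (ε : R[X]), ε ^ 2 = 1 ∧ G = ε * (T R j).comp M ∧ H = ε * (U R (j - 1)).comp M := by
  induction hd : H.degree using WellFoundedLT.induction generalizing G H with
  | _ d ih =>
    subst hd
    rcases eq_or_ne H 0 with rfl | hH
    · exact ⟨0, G, by simpa using h, by simp, by simp⟩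
    wlog hlt : (M * H - G).degree < H.degree generalizing G
    · obtain ⟨j, ε, hε, hG, hH⟩ := this (G := -G) (by rwa [neg_sq]) (by
        simpa using (degree_mul_sub_lt_or_degree_mul_add_lt hM hH h).resolve_left hlt)
      refine ⟨-j, -ε, by rwa [neg_sq], ?_, ?_⟩
      · rw [T_neg, neg_mul, ← hG, neg_neg]
      · rw [U_neg_sub_one, neg_comp, neg_mul_neg, ← hH]
    obtain ⟨j, ε, hε, hG, hH⟩ := ih _ hlt (G := M * G - (M ^ 2 - 1) * H) (H := M * H - G)
      (by linear_combination h) rfl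
    have hT : (T R (j + 1)).comp M = M * (T R j).comp M + (M ^ 2 - 1) * (U R (j - 1)).comp M := by
      have hT' := congrArg (comp · M) (T_eq_X_mul_T_sub_pol_U R (j - 1))
      rw [show j - 1 + 2 = j + 1 by ring, sub_add_cancel] at hT'
      simp only [sub_comp, mul_comp, X_comp, one_comp, pow_comp] at hT'
      linear_combination hT'
    have hU : (U R j).comp M = M * (U R (j - 1)).comp M + (T R j).comp M := by
      simpa using congrArg (comp · M) (U_eq_X_mul_U_add_T R (j - 1))
    refine ⟨j + 1, ε, hε, ?_, ?_⟩
    · linear_combination M * hG + (M ^ 2 - 1) * hH - ε * hT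
    · rw [add_sub_cancel_right]
      linear_combination hG + M * hH - ε * hU

theorem eq_or_eq_neg_chebyshev_comp {R : Type*} [CommRing R] [IsDomain R]
    [NeZero (2 : R)] {G H M : R[X]} {m : ℕ} (hM : M.natDegree ≠ 0)
    (hG : G.natDegree = m * M.natDegree) (h : G ^ 2 - (M ^ 2 - 1) * H ^ 2 = 1) :
    G = (Chebyshev.T R m).comp M ∨ G = -(Chebyshev.T R m).comp M := by
  obtain ⟨j, ε, hε, hGε, -⟩ := exists_eq_mul_chebyshev_comp hM h
  have hGT : G = (Chebyshev.T R j).comp M ∨ G = -(Chebyshev.T R j).comp M := by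
    rcases sq_eq_one_iff.1 hε with rfl | rfl
    · exact .inl (by rw [hGε, one_mul])
    · exact .inr (by rw [hGε, neg_one_mul])
  have hj : j.natAbs = m := by
    refine Nat.eq_of_mul_eq_mul_right (Nat.pos_of_ne_zero hM) ?_
    rw [← hG, ← Chebyshev.natDegree_T R j, ← natDegree_comp]
    rcases hGT with hGT | hGT
    · rw [hGT]
    · rw [hGT, natDegree_neg]
  rwa [← hj, Chebyshev.T_natAbs]

/-- `A` is, up to sign, the `m`-th Chebyshev polynomial of the first component of a solution of the
Pell–Abel equation for `D`: the solution with first component `A` is an `m`-th power. -/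
def IsPellPower {R : Type*} [CommRing R] (D A : R[X]) (m : ℕ) : Prop :=
  ∃ A' B' : R[X], B' ≠ 0 ∧ A' ^ 2 - D * B' ^ 2 = 1 ∧
    (A = (Chebyshev.T R m).comp A' ∨ A = -(Chebyshev.T R m).comp A')

theorem IsPellPower.exists_sq_eq_comp {R : Type*} [CommRing R] [IsDomain R] [NeZero (2 : R)]
    {D A : R[X]} {m k : ℕ} (hm : m ≠ 0) (hA : A.natDegree = m * k) (h : IsPellPower D A m) :
    ∃ g h : R[X], h.natDegree = k ∧ A ^ 2 = g.comp h := by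
  obtain ⟨A', B', -, -, hT⟩ := h
  have hsq : A ^ 2 = ((Chebyshev.T R m) ^ 2).comp A' := by
    rw [pow_comp]
    rcases hT with rfl | rfl
    · rfl
    · exact neg_sq _
  refine ⟨_, A', Nat.eq_of_mul_eq_mul_left (Nat.pos_of_ne_zero hm) ?_, hsq⟩
  rw [← hA]
  rcases hT with rfl | rfl <;> simp [natDegree_comp]

theorem comp_ne_zero_of_natDegree_ne_zero {R : Type*} [Semiring R] [NoZeroDivisors R] {p q : R[X]}
    (hp : p ≠ 0) (hq : q.natDegree ≠ 0) : p.comp q ≠ 0 := by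
  rw [Ne, comp_eq_zero_iff]
  rintro (h0 | ⟨-, hC⟩)
  · exact hp h0
  · exact hq (natDegree_eq_zero.2 ⟨_, hC.symm⟩)

section PellPower

variable {K : Type*} [Field K] [CharZero K]

theorem exists_squarefree_mul_sq_of_comp_eq {D B P h : K[X]}
    (hD : Squarefree D) (hh : h.natDegree ≠ 0) (hP : P ≠ 0) (hcomp : P.comp h = D * B ^ 2) :
    ∃ S R E : K[X], Squarefree S ∧ P = S * R ^ 2 ∧ S.comp h = D * E ^ 2 ∧
      E.natDegree < h.natDegree := by
  obtain ⟨S, R, hS, rfl⟩ := exists_squarefree_mul_sq hP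
  have hR : R.comp h ≠ 0 :=
    comp_ne_zero_of_natDegree_ne_zero (ne_zero_pow two_ne_zero (right_ne_zero_of_mul hP)) hh
  rw [mul_comp, pow_comp] at hcomp
  obtain ⟨E, hE⟩ := exists_eq_mul_sq_of_mul_sq_eq hD hR hcomp.symm
  exact ⟨S, R, E, hS, rfl, hE, natDegree_lt_of_sq_dvd_comp hS hh ⟨D, by rw [hE, mul_comm]⟩⟩

theorem exists_squarefree_natDegree_eq_two {D B P h : K[X]} (hD : Squarefree D)
    (hD0 : D.natDegree ≠ 0) (hDh : D.natDegree ≤ 2 * h.natDegree) (hP0 : P ≠ 0)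
    (hP : Even P.natDegree) (hcomp : P.comp h = D * B ^ 2) :
    ∃ S R E : K[X], Squarefree S ∧ S.natDegree = 2 ∧ P = S * R ^ 2 ∧ E ≠ 0 ∧
      S.comp h = D * E ^ 2 := by
  obtain ⟨S, R, E, hS, hPS, hE, hlt⟩ :=
    exists_squarefree_mul_sq_of_comp_eq hD (by omega) hP0 hcomp
  have hE0 : E ≠ 0 := by
    rintro rfl
    exact comp_ne_zero_of_natDegree_ne_zero hS.ne_zero (q := h) (by omega) (by simpa using hE)
  refine ⟨S, R, E, hS, ?_, hPS, hE0, hE⟩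
  have hS_even : Even S.natDegree := by
    rw [hPS, natDegree_mul hS.ne_zero (right_ne_zero_of_mul (hPS ▸ hP0)), natDegree_pow] at hP
    exact (Nat.even_add.1 hP).2 (even_two_mul _)
  have hmul : S.natDegree * h.natDegree = D.natDegree + 2 * E.natDegree := by
    rw [← natDegree_comp, hE, natDegree_mul hD.ne_zero (pow_ne_zero 2 hE0), natDegree_pow]
  have hS_pos : S.natDegree ≠ 0 := fun h0 => by
    rw [h0, zero_mul] at hmul
    omega
  have hS_lt : S.natDegree < 4 := Nat.lt_of_mul_lt_mul_right (a := h.natDegree) (by omega)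
  obtain ⟨c, hc⟩ := hS_even
  omega

theorem isPellPower_of_sq_eq_comp [IsAlgClosed K] {D A B g h : K[X]} {m : ℕ} (hD : Squarefree D)
    (hD0 : D.natDegree ≠ 0) (hDh : D.natDegree ≤ 2 * h.natDegree) (hm : m ≠ 0)
    (hPell : A ^ 2 - D * B ^ 2 = 1) (hA : A.natDegree = m * h.natDegree)
    (hgh : A ^ 2 = g.comp h) : IsPellPower D A m := by
  have hh : h.natDegree ≠ 0 := by omega
  have hg : g.natDegree = 2 * m := by
    refine Nat.eq_of_mul_eq_mul_right (Nat.pos_of_ne_zero hh) ?_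
    rw [← natDegree_comp, ← hgh, natDegree_pow, hA, mul_assoc]
  have hg1 : (g - 1).natDegree = 2 * m := by rw [← C_1, natDegree_sub_C, hg]
  obtain ⟨S, R, E, hS, hS2, hgS, hE0, hSE⟩ :=
    exists_squarefree_natDegree_eq_two (B := B) (P := g - 1) hD hD0 hDh
      (ne_zero_of_natDegree_gt (n := 0) (by omega)) ⟨m, by omega⟩
      (by rw [sub_comp, one_comp, ← hgh]; linear_combination hPell)
  obtain ⟨a, M, ha, hM, rfl⟩ := exists_eq_sq_mul_sq_sub_one hS hS2
  have hMh : (M.comp h).natDegree = h.natDegree := by rw [natDegree_comp, hM, one_mul]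
  have hAM : A ^ 2 - (M.comp h ^ 2 - 1) * (C a * R.comp h) ^ 2 = 1 := by
    have := congrArg (comp · h) hgS
    simp only [sub_comp, one_comp, mul_comp, pow_comp, C_comp, ← hgh] at this
    linear_combination this
  have hMD : M.comp h ^ 2 - D * (C a⁻¹ * E) ^ 2 = 1 := by
    simp only [mul_comp, sub_comp, pow_comp, C_comp, one_comp] at hSE
    have haa : C a⁻¹ * C a = 1 := by rw [← C_mul, inv_mul_cancel₀ ha, C_1]
    calc M.comp h ^ 2 - D * (C a⁻¹ * E) ^ 2
        = M.comp h ^ 2 - (C a⁻¹ * C a) ^ 2 * (M.comp h ^ 2 - 1) := by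
          linear_combination C a⁻¹ ^ 2 * hSE
      _ = 1 := by rw [haa]; ring
  exact ⟨M.comp h, C a⁻¹ * E, mul_ne_zero (C_ne_zero.2 (inv_ne_zero ha)) hE0, hMD,
    eq_or_eq_neg_chebyshev_comp (by rwa [hMh]) (by rwa [hMh]) hAM⟩

theorem isPellPower_iff_exists_sq_eq_comp [IsAlgClosed K] {D A B : K[X]} {m k : ℕ}
    (hD : Squarefree D) (hD0 : D.natDegree ≠ 0) (hDk : D.natDegree ≤ 2 * k) (hm : m ≠ 0)
    (hPell : A ^ 2 - D * B ^ 2 = 1) (hA : A.natDegree = m * k) :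
    IsPellPower D A m ↔ ∃ g h : K[X], h.natDegree = k ∧ A ^ 2 = g.comp h := by
  refine ⟨IsPellPower.exists_sq_eq_comp hm hA, ?_⟩
  rintro ⟨g, h, rfl, hgh⟩
  exact isPellPower_of_sq_eq_comp hD hD0 hDk hm hPell hA hgh

end PellPower

/-- A partition of the roots of `p` in `Ω` into blocks of cardinality `k`, preserved by the action
of the `F`-automorphisms of `Ω`. -/
structure IsBlockSystem {F Ω ι : Type*} [Field F] [Field Ω] [Algebra F Ω] (p : F[X]) (k : ℕ)
    (blocks : ι → Set Ω) : Prop where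
  disjoint : Pairwise (Function.onFun Disjoint blocks)
  iUnion_eq : ⋃ i, blocks i = p.rootSet Ω
  ncard_eq (i : ι) : (blocks i).ncard = k
  exists_image_eq (σ : Ω ≃ₐ[F] Ω) (i : ι) : ∃ j, σ '' blocks i = blocks j

namespace IsBlockSystem

variable {F Ω ι : Type*} [Field F] [Field Ω] [Algebra F Ω] {p : F[X]} {k : ℕ}
  {blocks : ι → Set Ω}

protected theorem mem_rootSet (hb : IsBlockSystem p k blocks) {i : ι} {z : Ω} (hz : z ∈ blocks i) :
    z ∈ p.rootSet Ω :=
  hb.iUnion_eq ▸ Set.mem_iUnion_of_mem i hz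

theorem finite (hb : IsBlockSystem p k blocks) (i : ι) : (blocks i).Finite :=
  (p.rootSet_finite Ω).subset fun _ => hb.mem_rootSet

theorem image_eq (hb : IsBlockSystem p k blocks) (σ : Ω ≃ₐ[F] Ω) {i j : ι} {z : Ω}
    (hz : z ∈ blocks i) (hσz : σ z ∈ blocks j) : σ '' blocks i = blocks j := by
  obtain ⟨l, hl⟩ := hb.exists_image_eq σ i
  have hlj : l = j := hb.disjoint.eq
    (Set.not_disjoint_iff.2 ⟨σ z, hl ▸ Set.mem_image_of_mem σ hz, hσz⟩)
  rw [hl, hlj]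

theorem map_finprod_mem (hb : IsBlockSystem p k blocks) (σ : Ω ≃ₐ[F] Ω) {i j : ι} {z : Ω}
    (hz : z ∈ blocks i) (hσz : σ z ∈ blocks j) :
    σ (∏ᶠ w ∈ blocks i, w) = ∏ᶠ w ∈ blocks j, w := by
  rw [← hb.image_eq σ hz hσz, finprod_mem_image σ.injective.injOn]
  exact (σ : Ω →* Ω).map_finprod_mem id (hb.finite i)

theorem finprod_mem_rootSet [Finite ι] (hb : IsBlockSystem p k blocks) {g : Ω → Ω}
    (hg : ∀ i, ∀ z ∈ blocks i, g z = ∏ᶠ w ∈ blocks i, w) :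
    ∏ᶠ z ∈ p.rootSet Ω, g z = (∏ᶠ z ∈ p.rootSet Ω, z) ^ k := by
  rw [← hb.iUnion_eq, finprod_mem_iUnion hb.disjoint hb.finite,
    finprod_mem_iUnion hb.disjoint hb.finite, finprod_pow (Set.toFinite _)]
  refine finprod_congr fun i => ?_
  rw [finprod_mem_congr rfl (hg i), finprod_mem_eq_finite_toFinset_prod _ (hb.finite i),
    Finset.prod_const, ← Set.ncard_eq_toFinset_card _ (hb.finite i), hb.ncard_eq]

theorem comp_equiv {ι' : Type*} (hb : IsBlockSystem p k blocks) (e : ι' ≃ ι) :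
    IsBlockSystem p k (blocks ∘ e) where
  disjoint := hb.disjoint.comp_of_injective e.injective
  iUnion_eq := by rw [← hb.iUnion_eq]; exact e.surjective.iUnion_comp blocks
  ncard_eq i := hb.ncard_eq (e i)
  exists_image_eq σ i := by
    obtain ⟨j, hj⟩ := hb.exists_image_eq σ (e i)
    exact ⟨e.symm j, by rw [Function.comp_apply, hj, Function.comp_apply, e.apply_symm_apply]⟩

end IsBlockSystem

theorem mem_adjoin_simple_of_forall_algEquiv {F Ω : Type*} [Field F] [Field Ω] [Algebra F Ω]
    [FiniteDimensional F Ω] [IsGalois F Ω] {y u : Ω} (h : ∀ σ : Ω ≃ₐ[F] Ω, σ y = y → σ u = u) :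
    u ∈ IntermediateField.adjoin F {y} := by
  rw [← IsGalois.fixedField_fixingSubgroup (IntermediateField.adjoin F {y}),
    IntermediateField.mem_fixedField_iff]
  exact fun σ hσ => h σ ((IntermediateField.mem_fixingSubgroup_iff _ σ).1 hσ y
    (IntermediateField.mem_adjoin_simple_self F y))

theorem mem_of_mem_adjoin_ratFunc {K Ω : Type*} [Field K] [Field Ω]
    [Algebra K Ω] [Algebra (RatFunc K) Ω] [IsScalarTower K (RatFunc K) Ω]
    {L : IntermediateField K Ω} {y u : Ω} (hX : algebraMap (RatFunc K) Ω RatFunc.X ∈ L)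
    (hy : y ∈ L) (hu : u ∈ IntermediateField.adjoin (RatFunc K) {y}) : u ∈ L := by
  have hL (r : RatFunc K) : algebraMap (RatFunc K) Ω r ∈ L := by
    have hpoly (P : K[X]) : algebraMap (RatFunc K) Ω (algebraMap K[X] (RatFunc K) P) ∈ L := by
      rw [← RatFunc.aeval_X_left_eq_algebraMap, ← aeval_algebraMap_apply]
      exact Algebra.adjoin_le (S := L.toSubalgebra) (Set.singleton_subset_iff.2 hX)
        (aeval_mem_adjoin_singleton K _)
    rw [← RatFunc.num_div_denom r, map_div₀]
    exact L.div_mem (hpoly _) (hpoly _)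
  exact (IntermediateField.adjoin_le_iff (T := L.toSubfield.toIntermediateField hL)).2
    (Set.singleton_subset_iff.2 hy) hu

open IntermediateField IntermediateField.algebraAdjoinAdjoin in
theorem mem_algebraAdjoin_of_isIntegral {K Ω : Type*} [Field K] [Field Ω] [Algebra K Ω]
    {y u : Ω} (hy : Transcendental K y) (hu : u ∈ K⟮y⟯)
    (hint : IsIntegral (Algebra.adjoin K {y}) u) : u ∈ Algebra.adjoin K {y} := by
  have : IsIntegrallyClosed (Algebra.adjoin K {y}) :=
    .of_equiv (algEquivOfTranscendental K y hy).toRingEquiv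
  have hint' : IsIntegral (Algebra.adjoin K {y}) (⟨u, hu⟩ : K⟮y⟯) :=
    (isIntegral_algebraMap_iff (algebraMap K⟮y⟯ Ω).injective).1 hint
  obtain ⟨c, hc⟩ := IsIntegrallyClosed.isIntegral_iff.1 hint'
  rw [← show (c : Ω) = u from congrArg Subtype.val hc]
  exact c.2

theorem isIntegral_adjoin_of_aeval_eq {K Ω : Type*} [Field K] [Field Ω] [Algebra K Ω]
    {f : K[X]} {y z : Ω} (hf : f.natDegree ≠ 0) (hz : aeval z f = aeval y f) :
    IsIntegral (Algebra.adjoin K {y}) z := by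
  have hf0 : f ≠ 0 := ne_zero_of_natDegree_gt (Nat.pos_of_ne_zero hf)
  refine IsIntegral.of_aeval_monic
    (p := (f * C f.leadingCoeff⁻¹).map (algebraMap K (Algebra.adjoin K {y})))
    ((monic_mul_leadingCoeff_inv hf0).map _) ?_ ?_
  · rwa [natDegree_map, natDegree_mul_leadingCoeff_inv f hf0]
  · have hz' : aeval z (f * C f.leadingCoeff⁻¹) = aeval y (f * C f.leadingCoeff⁻¹) := by
      simp only [map_mul, aeval_C, hz]
    rw [aeval_map_algebraMap, hz']
    exact isIntegral_algebraMap (A := Ω)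
      (x := (⟨_, aeval_mem_adjoin_singleton K y⟩ : Algebra.adjoin K {y}))

theorem exists_algebraMap_eq_of_forall_aeval_eq {R Ω : Type*} [CommRing R] [CommRing Ω]
    [IsDomain Ω] [Algebra R Ω] {P F : R[X]} {s : Finset Ω} {x : Ω} (hP : P.Monic)
    (hs : s.Nonempty) (hcard : P.natDegree ≤ s.card) (hroot : ∀ z ∈ s, aeval z P = 0)
    (hx : ∀ z ∈ s, aeval z F = x) : ∃ c : R, algebraMap R Ω c = x := by
  have := (algebraMap R Ω).domain_nontrivial
  have hlt : ((F %ₘ P).map (algebraMap R Ω) - C x).degree < s.card := by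
    refine (degree_sub_le _ _).trans_lt (max_lt ?_ (degree_C_le.trans_lt ?_))
    · exact degree_map_le.trans_lt ((degree_modByMonic_lt _ hP).trans_le
        (degree_le_natDegree.trans (by exact_mod_cast hcard)))
    · exact_mod_cast hs.card_pos
  have hC : (F %ₘ P).map (algebraMap R Ω) = C x := by
    refine Polynomial.eq_of_degree_sub_lt_of_eval_finset_eq s hlt fun z hz => ?_
    rw [eval_C, eval_map_algebraMap, aeval_modByMonic_eq_self_of_root (hroot z hz), hx z hz]
  exact ⟨(F %ₘ P).coeff 0, by rw [← coeff_map, hC, coeff_C_zero]⟩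

theorem aeval_mem_adjoin_of_forall_aeval_eq {K Ω : Type*} [Field K] [CommRing Ω] [IsDomain Ω]
    [Algebra K Ω] {f h : K[X]} {s : Finset Ω} {u x : Ω} (hs : s.Nonempty)
    (hdeg0 : h.natDegree ≠ 0) (hdeg : h.natDegree ≤ s.card) (hu : ∀ z ∈ s, aeval z h = u)
    (hx : ∀ z ∈ s, aeval z f = x) : x ∈ Algebra.adjoin K {u} := by
  have hh0 : h ≠ 0 := ne_zero_of_natDegree_gt (Nat.pos_of_ne_zero hdeg0)
  let v : Algebra.adjoin K {u} :=
    ⟨aeval u (X * C h.leadingCoeff⁻¹ : K[X]), aeval_mem_adjoin_singleton K u⟩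
  suffices ∃ c : Algebra.adjoin K {u}, algebraMap _ Ω c = x by
    obtain ⟨c, rfl⟩ := this
    exact c.2
  refine exists_algebraMap_eq_of_forall_aeval_eq (s := s)
    (P := (h * C h.leadingCoeff⁻¹).map (algebraMap K (Algebra.adjoin K {u})) - C v)
    (F := f.map (algebraMap K (Algebra.adjoin K {u}))) ?_ hs ?_ ?_ ?_
  · refine ((monic_mul_leadingCoeff_inv hh0).map _).sub_of_left (degree_C_le.trans_lt ?_)
    rw [← natDegree_pos_iff_degree_pos, natDegree_map, natDegree_mul_leadingCoeff_inv h hh0]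
    exact Nat.pos_of_ne_zero hdeg0
  · rwa [natDegree_sub_C, natDegree_map, natDegree_mul_leadingCoeff_inv h hh0]
  · intro z hz
    have hv : algebraMap _ Ω v = aeval z (h * C h.leadingCoeff⁻¹) := by
      rw [map_mul, hu z hz, aeval_C]
      exact (map_mul (aeval u) X _).trans (by rw [aeval_X, aeval_C])
    rw [map_sub, aeval_map_algebraMap, aeval_C, hv, sub_self]
  · intro z hz
    rw [aeval_map_algebraMap, hx z hz]

theorem finprod_mem_rootSet_eq_prod_aroots {F Ω M : Type*} [Field F] [Field Ω] [Algebra F Ω]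
    [CommMonoid M] {p : F[X]} (hp : p.Separable) (g : Ω → M) :
    ∏ᶠ z ∈ p.rootSet Ω, g z = ((p.aroots Ω).map g).prod := by
  classical
  rw [rootSet_def, finprod_mem_coe_finset, Finset.prod, Multiset.toFinset_val,
    (nodup_roots hp.map).dedup]

theorem exists_algEquiv_apply_eq_of_irreducible {F Ω : Type*} [Field F] [Field Ω] [Algebra F Ω]
    [Normal F Ω] {p : F[X]} (hp : Irreducible p) {y z : Ω} (hy : aeval y p = 0)
    (hz : aeval z p = 0) : ∃ σ : Ω ≃ₐ[F] Ω, σ y = z := by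
  refine minpoly.exists_algEquiv_of_root' ⟨p, hp.ne_zero, hy⟩ ?_
  rw [← minpoly.eq_of_irreducible hp hy, map_mul, hz, zero_mul]

theorem ncard_image_eq_and_ncard_fiber_eq {α β : Type*} {s : Set α} {φ : α → β} {r k : ℕ}
    (hk : k ≠ 0) (hfin : s.Finite) (hs : s.ncard = r * k) (himage : (φ '' s).ncard ≤ r)
    (hfiber : ∀ b ∈ φ '' s, {a ∈ s | φ a = b}.ncard ≤ k) :
    (φ '' s).ncard = r ∧ ∀ b ∈ φ '' s, {a ∈ s | φ a = b}.ncard = k := by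
  classical
  lift s to Finset α using hfin
  simp only [← Finset.coe_image, ← Finset.coe_filter, Finset.mem_coe, Set.ncard_coe_finset] at *
  have hsum := Finset.card_eq_sum_card_image φ s
  have hr : (s.image φ).card = r := by
    refine himage.antisymm (Nat.le_of_mul_le_mul_right ?_ (Nat.pos_of_ne_zero hk))
    rw [← hs, hsum]
    exact Finset.sum_le_card_nsmul _ _ _ hfiber
  refine ⟨hr, (Finset.sum_eq_sum_iff_of_le hfiber).1 ?_⟩
  rw [← hsum, hs, Finset.sum_const, hr, smul_eq_mul]

theorem ncard_le_natDegree_of_forall_aeval_eq {R Ω : Type*} [CommRing R] [CommRing Ω] [IsDomain Ω]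
    [Algebra R Ω] [FaithfulSMul R Ω] {q : R[X]} (hq : q.natDegree ≠ 0) {s : Set Ω} {w : Ω}
    (hs : ∀ z ∈ s, aeval z q = w) : s.ncard ≤ q.natDegree := by
  classical
  have hdeg : (q.map (algebraMap R Ω) - C w).natDegree = q.natDegree := by
    rw [natDegree_sub_C, natDegree_map_eq_of_injective (FaithfulSMul.algebraMap_injective R Ω)]
  have hne : q.map (algebraMap R Ω) - C w ≠ 0 := ne_zero_of_natDegree_gt (n := 0) (by omega)
  calc s.ncard ≤ (↑(q.map (algebraMap R Ω) - C w).roots.toFinset : Set Ω).ncard := by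
        refine Set.ncard_le_ncard (fun z hz => ?_) (Finset.finite_toSet _)
        simp [mem_roots hne, hs z hz]
    _ ≤ q.natDegree := by
        rw [Set.ncard_coe_finset, ← hdeg]
        exact (Multiset.toFinset_card_le _).trans (card_roots' _)

theorem ncard_rootSet_eq_natDegree {F Ω : Type*} [Field F] [Field Ω] [Algebra F Ω] {p : F[X]}
    (hp : p.Separable) (hs : (p.map (algebraMap F Ω)).Splits) :
    (p.rootSet Ω).ncard = p.natDegree := by
  rw [← Nat.card_coe_set_eq, Nat.card_eq_fintype_card, card_rootSet_eq_natDegree hp hs]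

theorem prod_roots_map_eval_comm {R : Type*} [CommRing R] [IsDomain R] {P H : R[X]} (hP : P.Splits)
    (hH : H.Splits) : P.leadingCoeff ^ H.natDegree * (P.roots.map H.eval).prod =
      (-1) ^ (P.natDegree * H.natDegree) *
        (H.leadingCoeff ^ P.natDegree * (H.roots.map P.eval).prod) := by
  rw [← resultant_eq_prod_eval P H _ le_rfl hP, ← resultant_eq_prod_eval H P _ le_rfl hH,
    resultant_comm]

theorem degree_prod_roots_map_C_sub_X {R : Type*} [CommRing R] [IsDomain R] {h : R[X]}
    (hh : h.Splits) (hh0 : h ≠ 0) (φ : R → R) :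
    (h.roots.map fun a => C (φ a) - X).prod.degree = h.degree := by
  have hdeg (a : R) : (C (φ a) - X).degree = 1 := by rw [← degree_neg, neg_sub, degree_X_sub_C]
  simp [degree_multiset_prod, hdeg, hh.degree_eq_card_roots hh0]

/-- The polynomial `f(Y) - x` over the rational function field `K(x)`, whose roots form the fibre of
`f` over the generic point. -/
noncomputable def genericFiber {K : Type*} [Field K] (f : K[X]) : (RatFunc K)[X] :=
  f.map (algebraMap K (RatFunc K)) - C RatFunc.X

section GenericFiber

variable {K : Type*} [Field K] {f : K[X]}

theorem natDegree_genericFiber (f : K[X]) : (genericFiber f).natDegree = f.natDegree := by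
  rw [genericFiber, natDegree_sub_C, natDegree_map]

theorem irreducible_genericFiber (hf : f.natDegree ≠ 0) : Irreducible (genericFiber f) := by
  have hirr : Irreducible (f.map C - C X : K[X][X]) := by
    have hswap : f.map C - C X = Bivariate.swap (-(X - C f : K[X][X])) := by
      rw [neg_sub, map_sub, Bivariate.swap_C, Bivariate.swap_Y]
    rw [hswap, MulEquiv.irreducible_iff]
    exact (Associated.refl (X - C f)).neg_left.symm.irreducible (irreducible_X_sub_C f)
  have hmap : (f.map C - C X : K[X][X]).map (algebraMap K[X] (RatFunc K)) = genericFiber f := by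
    rw [Polynomial.map_sub, Polynomial.map_map, map_C]
    rfl
  have hprim : (f.map C - C X : K[X][X]).IsPrimitive := hirr.isPrimitive (by
    rwa [natDegree_sub_C, natDegree_map_eq_of_injective C_injective])
  rwa [← hmap, ← hprim.irreducible_iff_irreducible_map_fraction_map]

variable {Ω : Type*} [Field Ω] [Algebra K Ω] [Algebra (RatFunc K) Ω]
  [IsScalarTower K (RatFunc K) Ω] {y z : Ω}

theorem aeval_genericFiber (f : K[X]) (z : Ω) :
    aeval z (genericFiber f) = aeval z f - algebraMap (RatFunc K) Ω RatFunc.X := by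
  rw [genericFiber, map_sub, aeval_map_algebraMap, aeval_C]

theorem mem_rootSet_genericFiber (hf : f.natDegree ≠ 0) :
    z ∈ (genericFiber f).rootSet Ω ↔ aeval z f = algebraMap (RatFunc K) Ω RatFunc.X := by
  rw [mem_rootSet, and_iff_right (irreducible_genericFiber hf).ne_zero, aeval_genericFiber,
    sub_eq_zero]

theorem aeval_algEquiv_apply (σ : Ω ≃ₐ[RatFunc K] Ω) (q : K[X]) (z : Ω) :
    aeval (σ z) q = σ (aeval z q) :=
  aeval_algHom_apply (σ.restrictScalars K) z q

variable (K Ω) in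
theorem transcendental_algebraMap_ratFunc_X :
    Transcendental K (algebraMap (RatFunc K) Ω RatFunc.X) :=
  (transcendental_algebraMap_iff (algebraMap (RatFunc K) Ω).injective).2 RatFunc.transcendental_X

theorem transcendental_of_mem_rootSet_genericFiber (hf : f.natDegree ≠ 0)
    (hy : y ∈ (genericFiber f).rootSet Ω) : Transcendental K y :=
  (transcendental_aeval_iff.1 ((mem_rootSet_genericFiber hf).1 hy ▸
    transcendental_algebraMap_ratFunc_X K Ω)).1

variable (Ω) in
theorem algebraMap_leadingCoeff_genericFiber (hf : f.natDegree ≠ 0) :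
    algebraMap (RatFunc K) Ω (genericFiber f).leadingCoeff = algebraMap K Ω f.leadingCoeff := by
  rw [leadingCoeff, natDegree_genericFiber, genericFiber, coeff_sub, coeff_C_of_ne_zero hf,
    sub_zero, coeff_map, ← leadingCoeff, ← IsScalarTower.algebraMap_apply]

theorem leadingCoeff_pow_mul_prod_aroots_map_aeval {h : K[X]} (hf : f.natDegree ≠ 0)
    (hh : h.Splits) (hs : ((genericFiber f).map (algebraMap (RatFunc K) Ω)).Splits) :
    algebraMap K Ω (f.leadingCoeff ^ h.natDegree) *
        (((genericFiber f).aroots Ω).map (aeval · h)).prod =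
      aeval (algebraMap (RatFunc K) Ω RatFunc.X)
        (C ((-1) ^ (f.natDegree * h.natDegree) * h.leadingCoeff ^ f.natDegree) *
          (h.roots.map fun a => C (f.eval a) - X).prod) := by
  have hroots : (h.map (algebraMap K Ω)).roots = h.roots.map (algebraMap K Ω) := hh.roots_map _
  have heval (a : K) : aeval (algebraMap K Ω a) (genericFiber f) =
      aeval (algebraMap (RatFunc K) Ω RatFunc.X) (C (f.eval a) - X) := by
    rw [aeval_genericFiber, aeval_algebraMap_apply, map_sub, aeval_X, aeval_C, coe_aeval_eq_eval]
  have hcomm := prod_roots_map_eval_comm hs (hh.map (algebraMap K Ω))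
  simp only [leadingCoeff_map, algebraMap_leadingCoeff_genericFiber Ω hf, natDegree_map,
    natDegree_genericFiber, hroots, Multiset.map_map, Function.comp_apply, eval_map_algebraMap,
    heval] at hcomm
  simp only [map_mul, map_pow, map_neg, map_one, map_multiset_prod, Multiset.map_map,
    Function.comp_apply, mul_assoc, aeval_C]
  exact hcomm

theorem exists_prod_aroots_map_aeval_eq {h : K[X]} (hf : f.natDegree ≠ 0) (hh : h.Splits)
    (hs : ((genericFiber f).map (algebraMap (RatFunc K) Ω)).Splits) :
    ∃ E : K[X], E.degree = h.degree ∧ (((genericFiber f).aroots Ω).map (aeval · h)).prod =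
      aeval (algebraMap (RatFunc K) Ω RatFunc.X) E := by
  have hl : f.leadingCoeff ^ h.natDegree ≠ 0 :=
    pow_ne_zero _ (leadingCoeff_ne_zero.2 (ne_zero_of_natDegree_gt (Nat.pos_of_ne_zero hf)))
  refine ⟨C (f.leadingCoeff ^ h.natDegree)⁻¹ *
    (C ((-1) ^ (f.natDegree * h.natDegree) * h.leadingCoeff ^ f.natDegree) *
      (h.roots.map fun a => C (f.eval a) - X).prod), ?_, ?_⟩
  · rw [degree_C_mul (inv_ne_zero hl)]
    rcases eq_or_ne h 0 with rfl | hh0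
    · simp [hf]
    · rw [degree_C_mul (by simp [hh0]), degree_prod_roots_map_C_sub_X hh hh0]
  · rw [map_mul, ← leadingCoeff_pow_mul_prod_aroots_map_aeval hf hh hs, aeval_C, ← mul_assoc,
      ← map_mul, inv_mul_cancel₀ hl, map_one, one_mul]

namespace IsBlockSystem

variable {ι : Type*} {k : ℕ} {blocks : ι → Set Ω}

theorem finprod_mem_mem_adjoin [FiniteDimensional (RatFunc K) Ω] [IsGalois (RatFunc K) Ω]
    (hf : f.natDegree ≠ 0) (hb : IsBlockSystem (genericFiber f) k blocks) {i : ι}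
    (hy : y ∈ blocks i) : ∏ᶠ w ∈ blocks i, w ∈ Algebra.adjoin K {y} := by
  have hroot {w : Ω} (hw : w ∈ blocks i) := (mem_rootSet_genericFiber hf).1 (hb.mem_rootSet hw)
  refine mem_algebraAdjoin_of_isIntegral
    (transcendental_of_mem_rootSet_genericFiber hf (hb.mem_rootSet hy)) ?_ ?_
  · have hyL := IntermediateField.mem_adjoin_simple_self K y
    refine mem_of_mem_adjoin_ratFunc ?_ hyL
      (mem_adjoin_simple_of_forall_algEquiv fun σ hσ => hb.map_finprod_mem σ hy (hσ.symm ▸ hy))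
    rw [← hroot hy]
    exact IntermediateField.algebra_adjoin_le_adjoin K _ (aeval_mem_adjoin_singleton K y)
  · exact finprod_mem_induction _ isIntegral_one (fun _ _ => IsIntegral.mul) fun z hz =>
      isIntegral_adjoin_of_aeval_eq hf ((hroot hz).trans (hroot hy).symm)

theorem exists_aeval_eq_finprod_mem [FiniteDimensional (RatFunc K) Ω] [IsGalois (RatFunc K) Ω]
    (hf : f.natDegree ≠ 0) (hb : IsBlockSystem (genericFiber f) k blocks) :
    ∃ h : K[X], ∀ i, ∀ z ∈ blocks i, aeval z h = ∏ᶠ w ∈ blocks i, w := by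
  by_cases hne : ∃ i y, y ∈ blocks i
  · obtain ⟨i, y, hy⟩ := hne
    have hmem := hb.finprod_mem_mem_adjoin hf hy
    rw [Algebra.adjoin_singleton_eq_range_aeval] at hmem
    obtain ⟨h, hh : aeval y h = _⟩ := hmem
    refine ⟨h, fun j z hz => ?_⟩
    obtain ⟨σ, rfl⟩ := exists_algEquiv_apply_eq_of_irreducible (irreducible_genericFiber hf)
      (mem_rootSet.1 (hb.mem_rootSet hy)).2 (mem_rootSet.1 (hb.mem_rootSet hz)).2
    rw [aeval_algEquiv_apply, hh, hb.map_finprod_mem σ hy hz]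
  · exact ⟨0, fun i z hz => absurd ⟨i, z, hz⟩ hne⟩

theorem natDegree_eq_of_aeval_eq_finprod_mem [IsAlgClosed K] [Finite ι] (hf : f.natDegree ≠ 0)
    (hsep : (genericFiber f).Separable)
    (hs : ((genericFiber f).map (algebraMap (RatFunc K) Ω)).Splits)
    (hb : IsBlockSystem (genericFiber f) k blocks) {h : K[X]}
    (hh : ∀ i, ∀ z ∈ blocks i, aeval z h = ∏ᶠ w ∈ blocks i, w) : h.natDegree = k := by
  obtain ⟨E, hE, hEprod⟩ := exists_prod_aroots_map_aeval_eq hf (IsAlgClosed.splits h) hs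
  obtain ⟨E₁, hE₁, hE₁prod⟩ := exists_prod_aroots_map_aeval_eq hf (Splits.X (R := K)) hs
  have hpow : E = E₁ ^ k := by
    refine transcendental_iff_injective.1 (transcendental_algebraMap_ratFunc_X K Ω) ?_
    rw [map_pow, ← hEprod, ← hE₁prod, ← finprod_mem_rootSet_eq_prod_aroots hsep,
      ← finprod_mem_rootSet_eq_prod_aroots hsep]
    simpa only [aeval_X] using hb.finprod_mem_rootSet hh
  rw [natDegree, ← hE, ← natDegree, hpow, natDegree_pow, natDegree_eq_of_degree_eq hE₁,
    natDegree_X, mul_one]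

theorem exists_eq_comp_of_aeval_eq (hf : f.natDegree ≠ 0)
    (hb : IsBlockSystem (genericFiber f) k blocks) {h : K[X]} {u : Ω} {i : ι}
    (hdeg0 : h.natDegree ≠ 0) (hdeg : h.natDegree ≤ k) (hu : ∀ z ∈ blocks i, aeval z h = u) :
    ∃ g : K[X], f = g.comp h := by
  have hroot {w : Ω} (hw : w ∈ blocks i) := (mem_rootSet_genericFiber hf).1 (hb.mem_rootSet hw)
  obtain ⟨y, hy⟩ : (blocks i).Nonempty :=
    Set.nonempty_of_ncard_ne_zero (by rw [hb.ncard_eq]; omega)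
  have hmem : aeval y f ∈ Algebra.adjoin K {u} := by
    refine aeval_mem_adjoin_of_forall_aeval_eq (f := f) (s := (hb.finite i).toFinset)
      ⟨y, (hb.finite i).mem_toFinset.2 hy⟩ hdeg0 ?_ ?_ ?_
    · rwa [← Set.ncard_eq_toFinset_card _ (hb.finite i), hb.ncard_eq]
    · exact fun z hz => hu z ((hb.finite i).mem_toFinset.1 hz)
    · exact fun z hz => (hroot ((hb.finite i).mem_toFinset.1 hz)).trans (hroot hy).symm
  rw [Algebra.adjoin_singleton_eq_range_aeval] at hmem
  obtain ⟨g, hg : aeval u g = aeval y f⟩ := hmem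
  refine ⟨g, transcendental_iff_injective.1
    (transcendental_of_mem_rootSet_genericFiber hf (hb.mem_rootSet hy)) ?_⟩
  rw [aeval_comp, hu y hy, hg]

theorem exists_eq_comp [CharZero K] [IsAlgClosed K]
    [IsSplittingField (RatFunc K) Ω (genericFiber f)] [Finite ι] [Nonempty ι]
    (hf : f.natDegree ≠ 0) (hk : k ≠ 0)
    (hb : IsBlockSystem (genericFiber f) k blocks) :
    ∃ g h : K[X], h.natDegree = k ∧ f = g.comp h := by
  have hsep := (irreducible_genericFiber hf).separable
  have hs := IsSplittingField.splits Ω (genericFiber f)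
  have := IsSplittingField.finiteDimensional Ω (genericFiber f)
  have : IsGalois (RatFunc K) Ω := IsGalois.of_separable_splitting_field hsep
  obtain ⟨h, hh⟩ := hb.exists_aeval_eq_finprod_mem hf
  have hdeg := hb.natDegree_eq_of_aeval_eq_finprod_mem hf hsep hs hh
  obtain ⟨g, hg⟩ := hb.exists_eq_comp_of_aeval_eq hf (by rwa [hdeg]) hdeg.le
    (hh (Classical.arbitrary ι))
  exact ⟨g, h, hdeg, hg⟩

end IsBlockSystem

section Fibers

variable [CharZero K] {g h : K[X]}

theorem ncard_fibers_genericFiber_comp (hgh : (g.comp h).natDegree ≠ 0)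
    (hs : ((genericFiber (g.comp h)).map (algebraMap (RatFunc K) Ω)).Splits) :
    ((aeval · h) '' (genericFiber (g.comp h)).rootSet Ω).ncard = g.natDegree ∧
      ∀ w ∈ (aeval · h) '' (genericFiber (g.comp h)).rootSet Ω,
        {z ∈ (genericFiber (g.comp h)).rootSet Ω | aeval z h = w}.ncard = h.natDegree := by
  obtain ⟨hg, hh⟩ := Nat.mul_ne_zero_iff.1 (natDegree_comp (p := g) ▸ hgh)
  refine ncard_image_eq_and_ncard_fiber_eq hh (rootSet_finite _ _) ?_ ?_ fun w _ => ?_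
  · rw [ncard_rootSet_eq_natDegree (irreducible_genericFiber hgh).separable hs,
      natDegree_genericFiber, natDegree_comp]
  · refine ncard_le_natDegree_of_forall_aeval_eq hg (w := algebraMap (RatFunc K) Ω RatFunc.X) ?_
    rintro _ ⟨z, hz, rfl⟩
    rw [← aeval_comp, (mem_rootSet_genericFiber hgh).1 hz]
  · exact ncard_le_natDegree_of_forall_aeval_eq hh fun z hz => hz.2

theorem isBlockSystem_fibers (hgh : (g.comp h).natDegree ≠ 0)
    (hs : ((genericFiber (g.comp h)).map (algebraMap (RatFunc K) Ω)).Splits) :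
    IsBlockSystem (genericFiber (g.comp h)) h.natDegree
      fun w : (aeval · h) '' (genericFiber (g.comp h)).rootSet Ω =>
        {z ∈ (genericFiber (g.comp h)).rootSet Ω | aeval z h = w} where
  disjoint v w hvw := Set.disjoint_left.2 fun z hv hw => hvw (Subtype.ext (hv.2.symm.trans hw.2))
  iUnion_eq := Set.Subset.antisymm (Set.iUnion_subset fun w => Set.sep_subset _ _)
    fun z hz => Set.mem_iUnion.2 ⟨⟨_, z, hz, rfl⟩, hz, rfl⟩
  ncard_eq w := (ncard_fibers_genericFiber_comp hgh hs).2 w w.2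
  exists_image_eq σ := by
    have hσ {z : Ω} : σ z ∈ (genericFiber (g.comp h)).rootSet Ω ↔
        z ∈ (genericFiber (g.comp h)).rootSet Ω := by
      rw [mem_rootSet_genericFiber hgh, mem_rootSet_genericFiber hgh, aeval_algEquiv_apply,
        σ.injective.eq_iff' (σ.commutes _)]
    rintro ⟨_, y, hy, rfl⟩
    refine ⟨⟨_, σ y, hσ.2 hy, rfl⟩, Set.ext fun z => ?_⟩
    obtain ⟨z, rfl⟩ := σ.surjective z
    simp only [σ.injective.mem_set_image, Set.mem_ofPred_eq, hσ, aeval_algEquiv_apply,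
      σ.injective.eq_iff]

end Fibers

theorem exists_isBlockSystem_iff_exists_eq_comp [CharZero K] [IsAlgClosed K]
    [IsSplittingField (RatFunc K) Ω (genericFiber f)] {r k : ℕ} (hr : r ≠ 0) (hk : k ≠ 0)
    (hf : f.natDegree = r * k) :
    (∃ blocks : Fin r → Set Ω, IsBlockSystem (genericFiber f) k blocks) ↔
      ∃ g h : K[X], h.natDegree = k ∧ f = g.comp h := by
  have hf0 : f.natDegree ≠ 0 := hf ▸ Nat.mul_ne_zero hr hk
  refine ⟨fun ⟨blocks, hb⟩ => ?_, ?_⟩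
  · have : NeZero r := ⟨hr⟩
    exact hb.exists_eq_comp hf0 hk
  · rintro ⟨g, h, rfl, rfl⟩
    have hs := IsSplittingField.splits Ω (genericFiber (g.comp h))
    have hg : g.natDegree = r :=
      Nat.eq_of_mul_eq_mul_right (Nat.pos_of_ne_zero hk) (natDegree_comp.symm.trans hf)
    have hcard : Nat.card ((aeval · h) '' (genericFiber (g.comp h)).rootSet Ω) = r := by
      rw [Nat.card_coe_set_eq, (ncard_fibers_genericFiber_comp hf0 hs).1, hg]
    have := Nat.finite_of_card_ne_zero (hcard.trans_ne hr)
    exact ⟨_, (isBlockSystem_fibers hf0 hs).comp_equiv (Finite.equivFinOfCardEq hcard).symm⟩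

end GenericFiber

theorem stmt9_general {K : Type*} [Field K] [IsAlgClosed K] [CharZero K] {D A B : K[X]}
    (hD : Squarefree D) (hD0 : D.natDegree ≠ 0) (hPell : A ^ 2 - D * B ^ 2 = 1) {m : ℕ}
    (hmn : m ∣ A.natDegree) (hnd : D.natDegree ≤ 2 * (A.natDegree / m)) :
    IsPellPower D A m ↔
      ∃ blocks : Fin (2 * m) → Set (genericFiber (A ^ 2)).SplittingField,
        IsBlockSystem (genericFiber (A ^ 2)) (A.natDegree / m) blocks := by
  have hm : m ≠ 0 := by
    rintro rfl
    simp [hD0] at hnd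
  have hk : A.natDegree / m ≠ 0 := by omega
  have hA : A.natDegree = m * (A.natDegree / m) := (Nat.mul_div_cancel' hmn).symm
  have hA2 : (A ^ 2).natDegree = 2 * m * (A.natDegree / m) := by
    rw [natDegree_pow, mul_assoc, ← hA]
  rw [isPellPower_iff_exists_sq_eq_comp hD hD0 hnd hm hPell hA,
    exists_isBlockSystem_iff_exists_eq_comp (Nat.mul_ne_zero two_ne_zero hm) hk hA2]

theorem stmt9 (d : ℕ) (hd : 2 ≤ d) (D A B : Polynomial ℂ)
    (hD : Squarefree D) (hdeg : D.natDegree = 2*d)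
    (hB : B ≠ 0) (hPell : A ^ 2 - D * B ^ 2 = 1)
    (n : ℕ) (hn : A.natDegree = n)
    (m : ℕ) (hm : 1 ≤ m) (hmn : m ∣ n) (hnd : d ≤ n / m) :
    (∃ A' B' : Polynomial ℂ, B' ≠ 0 ∧ A' ^ 2 - D * B' ^ 2 = 1 ∧
        (A = (Polynomial.Chebyshev.T ℂ (m : ℤ)).comp A' ∨
         A = -((Polynomial.Chebyshev.T ℂ (m : ℤ)).comp A'))) ↔
    (∃ blocks : Fin (2*m) → Set (pellCover A).SplittingField,
        Pairwise (Function.onFun Disjoint blocks) ∧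
        (⋃ i, blocks i) = (pellCover A).rootSet (pellCover A).SplittingField ∧
        (∀ i, (blocks i).ncard = n / m) ∧
        (∀ σ : (pellCover A).Gal, ∀ i, ∃ j, (⇑σ) '' blocks i = blocks j)) := by
  subst hn
  exact (stmt9_general hD (by omega) hPell hmn (by omega)).trans
    ⟨fun ⟨blocks, hb⟩ => ⟨blocks, hb.disjoint, hb.iUnion_eq, hb.ncard_eq, hb.exists_image_eq⟩,
      fun ⟨blocks, hdisj, hunion, hcard, himage⟩ => ⟨blocks, hdisj, hunion, hcard, himage⟩⟩
end

section
/- Let n ≥ 3. The number of equivalence classes, under simultaneous conjugation by elements of S_{2n}, of admissible 4-tuples (σ0, σ∞, σ1, τ) such that the cycle type of σ1·τ consists of one 3-cycle and n−3 transpositions equals (n−1)(n−2)/2. -/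
/-- A 4-tuple `(σ0, σ∞, σ1, τ)` of permutations of `{1,…,2n}` (realized as permutations of `ℕ`
supported on `{1,…,2n}`) is admissible if `σ0·σ∞·σ1·τ = 1`, `σ0` is a product of `n` disjoint
transpositions (a fixed-point-free involution of `{1,…,2n}`), `σ∞` is a `2n`-cycle, `σ1` is a
product of `n-2` disjoint transpositions, and `τ` is a transposition. -/
def IsAdmissible (n : ℕ) (σ0 σi σ1 τ : Equiv.Perm ℕ) : Prop :=
  σ0 * σi * σ1 * τ = 1 ∧
  σ0 * σ0 = 1 ∧ {x | σ0 x ≠ x} = Set.Icc 1 (2*n) ∧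
  σi.IsCycle ∧ {x | σi x ≠ x} = Set.Icc 1 (2*n) ∧
  σ1 * σ1 = 1 ∧ {x | σ1 x ≠ x} ⊆ Set.Icc 1 (2*n) ∧ {x | σ1 x ≠ x}.ncard = 2*(n-2) ∧
  ∃ a b, a ≠ b ∧ a ∈ Set.Icc 1 (2*n) ∧ b ∈ Set.Icc 1 (2*n) ∧ τ = Equiv.swap a b

/-- `σ` has cycle type consisting of one 3-cycle and `n-3` transpositions. -/
def HasThreeCycleType (n : ℕ) (σ : Equiv.Perm ℕ) : Prop :=
  ∃ a b c π : _, a ≠ b ∧ b ≠ c ∧ a ≠ c ∧ (π : Equiv.Perm ℕ) * π = 1 ∧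
    (∀ x, π x ≠ x → x ∉ ({a, b, c} : Set ℕ)) ∧ {x | π x ≠ x}.ncard = 2*(n-3) ∧
    σ = π * (Equiv.swap a b * Equiv.swap b c)

/-!
Since `σ1 = (σ1 * τ) * τ` is an involution, `τ` is an edge of the 3-cycle of `σ1 * τ = σ∞⁻¹ * σ0`.
Conjugate so that `σ∞ = (1 2 … 2n)` and this 3-cycle is `x ↦ 2n ↦ z ↦ x` with `τ = (x 2n)`. Off
`{x, 2n, z}` the permutation `σ∞⁻¹ * σ0` is an involution, that is, `σ0 w = σ∞ (σ0 (σ∞ w))`. So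
`σ0` is decreasing along each arc of `σ∞` cut out by the triangle, which forces `x < z` and makes
`σ0` the reversal of the three blocks `[1, x]`, `[x + 1, z]` and `[z + 1, 2n]`. A reversal has no
fixed point exactly on a block of even length, so the normal forms correspond to the pairs
`1 ≤ p < k < n` through `x = 2p` and `z = 2k`. They are pairwise non-conjugate, because a
permutation commuting with the `2n`-cycle and fixing the point `2n` is trivial on `{1, …, 2n}`.
-/

section

open Equiv

variable {α : Type*}

section ConjClass

variable {s : Set α} {γ : Perm α} {t : Perm α × Perm α × Perm α × Perm α}

/-- The quadruple `t` conjugated componentwise by `γ`, in the convention `σ ↦ γ⁻¹ * σ * γ`. -/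
def conjTuple (γ : Perm α) (t : Perm α × Perm α × Perm α × Perm α) :
    Perm α × Perm α × Perm α × Perm α :=
  (γ⁻¹ * t.1 * γ, γ⁻¹ * t.2.1 * γ, γ⁻¹ * t.2.2.1 * γ, γ⁻¹ * t.2.2.2 * γ)

/-- The class of the quadruple `t` under simultaneous conjugation by the permutations supported
in `s`. -/
def conjClass (s : Set α) (t : Perm α × Perm α × Perm α × Perm α) :
    Set (Perm α × Perm α × Perm α × Perm α) :=
  {p | ∃ γ : Perm α, {x | γ x ≠ x} ⊆ s ∧ p = conjTuple γ t}

lemma conjTuple_one : conjTuple 1 t = t := by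
  simp [conjTuple]

lemma conjTuple_mul (γ δ : Perm α) : conjTuple (γ * δ) t = conjTuple δ (conjTuple γ t) := by
  simp only [conjTuple, mul_inv_rev, mul_assoc]

lemma self_mem_conjClass : t ∈ conjClass s t :=
  ⟨1, by simp, conjTuple_one.symm⟩

lemma conjClass_conjTuple_subset (hγ : {x | γ x ≠ x} ⊆ s) :
    conjClass s (conjTuple γ t) ⊆ conjClass s t := by
  rintro _ ⟨δ, hδ, rfl⟩
  exact ⟨γ * δ, (Perm.set_support_mul_subset γ δ).trans (Set.union_subset hγ hδ),
    (conjTuple_mul γ δ).symm⟩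

lemma conjClass_conjTuple (hγ : {x | γ x ≠ x} ⊆ s) :
    conjClass s (conjTuple γ t) = conjClass s t := by
  refine (conjClass_conjTuple_subset hγ).antisymm ?_
  have hγ' : {x | γ⁻¹ x ≠ x} ⊆ s := (Perm.set_support_symm_eq γ).trans_subset hγ
  calc conjClass s t = conjClass s (conjTuple γ⁻¹ (conjTuple γ t)) := by
        rw [← conjTuple_mul, mul_inv_cancel, conjTuple_one]
    _ ⊆ conjClass s (conjTuple γ t) := conjClass_conjTuple_subset hγ'

end ConjClass

section Conjugation

variable {f c γ : Perm α} {s : Set α} {a b : α}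

lemma apply_mem_iff_of_support_subset (hγ : {x | γ x ≠ x} ⊆ s) : γ a ∈ s ↔ a ∈ s := by
  by_cases ha : γ a = a
  · rw [ha]
  · exact iff_of_true (hγ fun h => ha (γ.injective h)) (hγ ha)

lemma support_conj_eq (hγ : {x | γ x ≠ x} ⊆ s) (hf : {x | f x ≠ x} = s) :
    {x | (γ⁻¹ * f * γ) x ≠ x} = s := by
  ext x
  rw [← apply_mem_iff_of_support_subset hγ, ← hf]
  simp only [Set.mem_ofPred_eq, Perm.mul_apply, ne_eq, Perm.inv_eq_iff_eq]

lemma apply_eq_self_of_commute_of_sameCycle (hγc : Commute γ c) (ha : γ a = a)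
    (hab : c.SameCycle a b) : γ b = b := by
  obtain ⟨i, rfl⟩ := hab
  rw [← Perm.mul_apply, (hγc.zpow_right i).eq, Perm.mul_apply, ha]

lemma eq_one_of_commute_of_isCycleOn (hc : c.IsCycleOn s) (hγc : Commute γ c)
    (hγ : {x | γ x ≠ x} ⊆ s) (has : a ∈ s) (ha : γ a = a) : γ = 1 := by
  ext b
  by_contra hb
  exact hb (apply_eq_self_of_commute_of_sameCycle hγc ha (hc.2 has (hγ hb)))

lemma exists_conj_eq_of_isCycle (hs : s.Finite) (hf : f.IsCycle) (hc : c.IsCycle)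
    (hfs : {x | f x ≠ x} = s) (hcs : {x | c x ≠ x} = s) :
    ∃ γ : Perm α, {x | γ x ≠ x} ⊆ s ∧ γ⁻¹ * f * γ = c := by
  classical
  have := hs.fintype
  have hfon : f.IsCycleOn s := hfs ▸ hf.isCycleOn
  have hcon : c.IsCycleOn s := hcs ▸ hc.isCycleOn
  have hnt : s.Nontrivial := by
    obtain ⟨x, hx, -⟩ := hf
    exact ⟨f x, by rwa [hfon.apply_mem_iff, ← hfs], x, by rwa [← hfs], hx⟩
  have hsupp : ∀ {g : Perm α} (hg : g.IsCycleOn s),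
      (g.subtypePerm fun _ => hg.apply_mem_iff : Perm s).support = Finset.univ := by
    intro g hg
    ext x
    simpa [Subtype.ext_iff] using hg.apply_ne hnt x.2
  obtain ⟨δ, hδ⟩ := isConj_iff.1 <| (hcon.isCycle_subtypePerm hnt).isConj
    (hfon.isCycle_subtypePerm hnt) (by rw [hsupp hcon, hsupp hfon])
  refine ⟨Perm.ofSubtype δ, fun x hx => ?_, ?_⟩
  · by_contra hxs
    exact hx (Perm.ofSubtype_apply_of_not_mem δ hxs)
  · have hconj := congrArg Perm.ofSubtype hδ
    rw [map_mul, map_mul, map_inv,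
      Perm.ofSubtype_subtypePerm _ fun x hx => hcs.subset hx,
      Perm.ofSubtype_subtypePerm _ fun x hx => hfs.subset hx] at hconj
    rw [← hconj]
    group

lemma exists_conj_eq_of_isCycle_of_apply_eq (hs : s.Finite) (hf : f.IsCycle) (hc : c.IsCycle)
    (hfs : {x | f x ≠ x} = s) (hcs : {x | c x ≠ x} = s) (ha : a ∈ s) (hb : b ∈ s) :
    ∃ γ : Perm α, {x | γ x ≠ x} ⊆ s ∧ γ⁻¹ * f * γ = c ∧ γ a = b := by
  obtain ⟨γ, hγ, hγc⟩ := exists_conj_eq_of_isCycle hs hf hc hfs hcs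
  have hγb : γ⁻¹ b ∈ s := by
    rw [← apply_mem_iff_of_support_subset hγ]
    simpa using hb
  obtain ⟨i, hi⟩ := hc.sameCycle (hcs.superset ha) (hcs.superset hγb)
  refine ⟨γ * c ^ i, ?_, ?_, ?_⟩
  · exact (Perm.set_support_mul_subset _ _).trans
      (Set.union_subset hγ ((Perm.set_support_zpow_subset c i).trans hcs.subset))
  · calc (γ * c ^ i)⁻¹ * f * (γ * c ^ i) = (c ^ i)⁻¹ * (γ⁻¹ * f * γ) * c ^ i := by group
      _ = c := by rw [hγc]; group
  · simp [hi]

end Conjugation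

/-- The permutation `ρ` has the 3-cycle `x ↦ y ↦ z ↦ x` and is an involution off `{x, y, z}`. -/
structure HasTriangle (ρ : Perm α) (x y z : α) : Prop where
  ne_xy : x ≠ y
  ne_yz : y ≠ z
  ne_xz : x ≠ z
  apply_x : ρ x = y
  apply_y : ρ y = z
  apply_z : ρ z = x
  apply_apply_of_ne : ∀ w, w ≠ x → w ≠ y → w ≠ z → ρ (ρ w) = w

namespace HasTriangle

variable {ρ s c : Perm α} {x y z w a b : α}

lemma rotate (h : HasTriangle ρ x y z) : HasTriangle ρ y z x :=
  ⟨h.ne_yz, h.ne_xz.symm, h.ne_xy.symm, h.apply_y, h.apply_z, h.apply_x,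
    fun w hy hz hx => h.apply_apply_of_ne w hx hy hz⟩

lemma conj (h : HasTriangle ρ x y z) (γ : Perm α) :
    HasTriangle (γ⁻¹ * ρ * γ) (γ⁻¹ x) (γ⁻¹ y) (γ⁻¹ z) where
  ne_xy := by simpa using h.ne_xy
  ne_yz := by simpa using h.ne_yz
  ne_xz := by simpa using h.ne_xz
  apply_x := by simp [h.apply_x]
  apply_y := by simp [h.apply_y]
  apply_z := by simp [h.apply_z]
  apply_apply_of_ne w hx hy hz := by
    have hγw := h.apply_apply_of_ne (γ w) (fun e => hx (by simp [← e]))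
      (fun e => hy (by simp [← e])) (fun e => hz (by simp [← e]))
    simp [hγw]

lemma apply_apply_ne_iff (h : HasTriangle ρ x y z) :
    ρ (ρ w) ≠ w ↔ w = x ∨ w = y ∨ w = z := by
  refine ⟨fun hw => ?_, ?_⟩
  · by_contra! hne
    exact hw (h.apply_apply_of_ne w hne.1 hne.2.1 hne.2.2)
  · rintro (rfl | rfl | rfl)
    · rw [h.apply_x, h.apply_y]
      exact h.ne_xz.symm
    · rw [h.apply_y, h.apply_z]
      exact h.ne_xy
    · rw [h.apply_z, h.apply_x]
      exact h.ne_yz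

/-- If `ρ * swap a b` is an involution, then `swap a b` conjugates `ρ` to `ρ⁻¹`, so it preserves
the set of points moved by `ρ ^ 2`. -/
lemma apply_apply_swap_ne_iff [DecidableEq α] (hρ : (ρ * swap a b) * (ρ * swap a b) = 1) :
    ρ (ρ (swap a b w)) ≠ swap a b w ↔ ρ (ρ w) ≠ w := by
  have hinv : ρ * swap a b = swap a b * ρ⁻¹ := by
    rw [eq_inv_of_mul_eq_one_left hρ, mul_inv_rev, swap_inv]
  have hinv_apply : ∀ v, ρ (swap a b v) = swap a b (ρ⁻¹ v) := Perm.congr_fun hinv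
  rw [hinv_apply, hinv_apply, (swap a b).injective.ne_iff, ne_eq, Perm.inv_eq_iff_eq,
    Perm.inv_eq_iff_eq, eq_comm]

lemma exists_swap_eq [DecidableEq α] (h : HasTriangle ρ x y z)
    (hρ : (ρ * swap a b) * (ρ * swap a b) = 1) :
    ∃ u v w, HasTriangle ρ u v w ∧ swap a b = swap u v := by
  have hmem : (a = x ∨ a = y ∨ a = z) ↔ (b = x ∨ b = y ∨ b = z) := by
    rw [← h.apply_apply_ne_iff, ← h.apply_apply_ne_iff, ← apply_apply_swap_ne_iff hρ,
      swap_apply_left]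
  by_cases ha : a = x ∨ a = y ∨ a = z
  · have hab : a ≠ b := by
      rintro rfl
      exact h.apply_apply_ne_iff.2 ha (by simpa using Perm.congr_fun hρ a)
    have hedge : swap a b = swap x y ∨ swap a b = swap y z ∨ swap a b = swap z x := by
      have hb := hmem.1 ha
      rcases ha with rfl | rfl | rfl <;> rcases hb with rfl | rfl | rfl <;>
        simp_all [swap_comm]
    rcases hedge with e | e | e
    exacts [⟨x, y, z, h, e⟩, ⟨y, z, x, h.rotate, e⟩, ⟨z, x, y, h.rotate.rotate, e⟩]
  · have hb := hmem.not.1 ha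
    push Not at ha hb
    have hx : ρ (swap a b (ρ (swap a b x))) = x := Perm.congr_fun hρ x
    rw [swap_apply_of_ne_of_ne ha.1.symm hb.1.symm, h.apply_x,
      swap_apply_of_ne_of_ne ha.2.1.symm hb.2.1.symm, h.apply_y] at hx
    exact absurd hx.symm h.ne_xz

lemma eq_apply_apply_apply (h : HasTriangle (c⁻¹ * s) x y z) (hs : s * s = 1)
    (hx : w ≠ x) (hy : w ≠ y) (hz : w ≠ z) : s w = c (s (c w)) := by
  have hw : s (c⁻¹ (s w)) = c w := Perm.inv_eq_iff_eq.1 (h.apply_apply_of_ne w hx hy hz)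
  have hsw : s (s (c⁻¹ (s w))) = c⁻¹ (s w) := Perm.congr_fun hs _
  rw [← hw, hsw, ← Perm.inv_eq_iff_eq]

end HasTriangle

lemma HasThreeCycleType.exists_hasTriangle {n : ℕ} {σ : Perm ℕ} (h : HasThreeCycleType n σ) :
    ∃ x y z, HasTriangle σ x y z := by
  obtain ⟨a, b, c, π, hab, hbc, hac, hπ, hdisj, -, rfl⟩ := h
  have hfix : ∀ x, x = a ∨ x = b ∨ x = c → π x = x := by
    intro x hx
    by_contra hne
    exact hdisj x hne hx
  have ha : π a = a := hfix a (by simp)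
  have hb : π b = b := hfix b (by simp)
  have hc : π c = c := hfix c (by simp)
  refine ⟨a, b, c, hab, hbc, hac, ?_, ?_, ?_, fun w hwa hwb hwc => ?_⟩
  · simp [swap_apply_of_ne_of_ne hab hac, hb]
  · simp [swap_apply_of_ne_of_ne hac.symm hbc.symm, hc]
  · simp [ha]
  · have hcycle : ∀ v, v ≠ a → v ≠ b → v ≠ c → (swap a b * swap b c) v = v := by
      intro v hva hvb hvc
      rw [Perm.mul_apply, swap_apply_of_ne_of_ne hvb hvc, swap_apply_of_ne_of_ne hva hvb]
    have hne : ∀ {v}, π v = v → w ≠ v → π w ≠ v := fun hv hwv => hv ▸ π.injective.ne hwv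
    rw [Perm.mul_apply π, Perm.mul_apply π, hcycle w hwa hwb hwc,
      hcycle _ (hne ha hwa) (hne hb hwb) (hne hc hwc)]
    exact Perm.congr_fun hπ w

section IccCycle

variable {N x : ℕ}

/-- The cycle `(1 2 … N)`. -/
def iccCycle (N : ℕ) : Perm ℕ :=
  (List.range' 1 N).formPerm

lemma iccCycle_apply_of_lt (h1 : 1 ≤ x) (hN : x < N) : iccCycle N x = x + 1 := by
  have h := List.formPerm_apply_lt_getElem (List.range' 1 N) List.nodup_range' (x - 1)
    (by rw [List.length_range']; omega)
  simp only [List.getElem_range'] at h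
  rwa [show 1 + 1 * (x - 1) = x by omega, show 1 + 1 * (x - 1 + 1) = x + 1 by omega] at h

lemma iccCycle_apply_self (hN : 1 ≤ N) : iccCycle N N = 1 := by
  have h := List.formPerm_apply_getElem (List.range' 1 N) List.nodup_range' (N - 1)
    (by rw [List.length_range']; omega)
  simp only [List.getElem_range', List.length_range', Nat.sub_add_cancel hN, Nat.mod_self] at h
  rwa [show 1 + 1 * (N - 1) = N by omega, show 1 + 1 * 0 = 1 by omega] at h

lemma iccCycle_apply_of_notMem (hx : x ∉ Set.Icc 1 N) : iccCycle N x = x := by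
  refine List.formPerm_apply_of_notMem fun hmem => hx ?_
  rw [List.mem_range'_1] at hmem
  exact ⟨hmem.1, by omega⟩

lemma iccCycle_apply (N x : ℕ) :
    iccCycle N x = if 1 ≤ x ∧ x < N then x + 1 else if x = N ∧ 1 ≤ N then 1 else x := by
  split_ifs with hlt hN
  · exact iccCycle_apply_of_lt hlt.1 hlt.2
  · rw [hN.1, iccCycle_apply_self hN.2]
  · exact iccCycle_apply_of_notMem fun hx => by
      rw [Set.mem_Icc] at hx
      omega

lemma support_iccCycle_subset : {x | iccCycle N x ≠ x} ⊆ Set.Icc 1 N := fun _ hx =>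
  by_contra fun hmem => hx (iccCycle_apply_of_notMem hmem)

lemma isCycle_iccCycle (hN : 2 ≤ N) : (iccCycle N).IsCycle :=
  List.isCycle_formPerm List.nodup_range' (by rwa [List.length_range'])

lemma support_iccCycle (hN : 2 ≤ N) : {x | iccCycle N x ≠ x} = Set.Icc 1 N := by
  ext x
  simp only [Set.mem_ofPred_eq, Set.mem_Icc, iccCycle_apply]
  split_ifs <;> omega

end IccCycle
section Reversal

variable {a b N x : ℕ}

/-- The reversal `x ↦ l + r - x` of the interval `[l, r]`, fixing every other point. -/
def iccReversal (l r : ℕ) : Perm ℕ :=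
  Function.Involutive.toPerm (fun x => if l ≤ x ∧ x ≤ r then l + r - x else x) fun x => by
    dsimp only
    split_ifs <;> omega

lemma iccReversal_apply (l r x : ℕ) :
    iccReversal l r x = if l ≤ x ∧ x ≤ r then l + r - x else x :=
  rfl

/-- The involution reversing each of the three consecutive blocks `[1, a]`, `[a + 1, b]` and
`[b + 1, N]`. It plays the role of `σ0`. -/
def blockReversal (a b N : ℕ) : Perm ℕ :=
  iccReversal 1 a * iccReversal (a + 1) b * iccReversal (b + 1) N

/-- The involution reversing each of the three blocks `[1, a - 1]`, `[a + 1, b - 1]` and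
`[b + 1, N - 1]` left by removing `a`, `b` and `N`. It is the involutive part of `σ1 * τ`. -/
def innerReversal (a b N : ℕ) : Perm ℕ :=
  iccReversal 1 (a - 1) * iccReversal (a + 1) (b - 1) * iccReversal (b + 1) (N - 1)

lemma blockReversal_apply (hab : a < b) (hbN : b < N) (x : ℕ) :
    blockReversal a b N x =
      if 1 ≤ x ∧ x ≤ a then a + 1 - x
      else if a < x ∧ x ≤ b then a + 1 + b - x
      else if b < x ∧ x ≤ N then b + 1 + N - x
      else x := by
  simp only [blockReversal, Perm.mul_apply, iccReversal_apply]
  split_ifs <;> omega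

lemma innerReversal_apply (ha : 1 ≤ a) (hab : a < b) (hbN : b < N) (x : ℕ) :
    innerReversal a b N x =
      if 1 ≤ x ∧ x < a then a - x
      else if a < x ∧ x < b then a + b - x
      else if b < x ∧ x < N then b + N - x
      else x := by
  simp only [innerReversal, Perm.mul_apply, iccReversal_apply]
  split_ifs <;> omega

lemma innerReversal_mul_swap_apply (ha : 1 ≤ a) (hab : a < b) (hbN : b < N) (x : ℕ) :
    (innerReversal a b N * swap a b) x =
      if 1 ≤ x ∧ x < a then a - x
      else if x = a then b
      else if a < x ∧ x < b then a + b - x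
      else if x = b then a
      else if b < x ∧ x < N then b + N - x
      else x := by
  rw [Perm.mul_apply, swap_apply_def, innerReversal_apply ha hab hbN]
  split_ifs <;> omega

lemma blockReversal_mul_self (hab : a < b) (hbN : b < N) :
    blockReversal a b N * blockReversal a b N = 1 := by
  ext x
  simp only [Perm.mul_apply, Perm.one_apply, blockReversal_apply hab hbN]
  split_ifs <;> omega

lemma innerReversal_mul_self (ha : 1 ≤ a) (hab : a < b) (hbN : b < N) :
    innerReversal a b N * innerReversal a b N = 1 := by
  ext x
  simp only [Perm.mul_apply, Perm.one_apply, innerReversal_apply ha hab hbN]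
  split_ifs <;> omega

lemma innerReversal_apply_eq_self (ha : 1 ≤ a) (hab : a < b) (hbN : b < N)
    (hx : x = a ∨ x = b ∨ x = N) : innerReversal a b N x = x := by
  rw [innerReversal_apply ha hab hbN]
  split_ifs <;> omega

lemma innerReversal_mul_swap_mul_self (ha : 1 ≤ a) (hab : a < b) (hbN : b < N) :
    innerReversal a b N * swap a b * (innerReversal a b N * swap a b) = 1 := by
  have hcomm : innerReversal a b N * swap a b = swap a b * innerReversal a b N := by
    rw [mul_swap_eq_swap_mul, innerReversal_apply_eq_self ha hab hbN (by simp),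
      innerReversal_apply_eq_self ha hab hbN (by simp)]
  rw [mul_assoc, ← mul_assoc (swap a b), ← hcomm, mul_assoc _ (swap a b), swap_mul_self, mul_one,
    innerReversal_mul_self ha hab hbN]

lemma blockReversal_eq_iccCycle_mul (ha : 1 ≤ a) (hab : a < b) (hbN : b < N) :
    blockReversal a b N = iccCycle N * (innerReversal a b N * swap a b * swap a N) := by
  ext x
  rw [Perm.mul_apply, Perm.mul_apply, blockReversal_apply hab hbN,
    innerReversal_mul_swap_apply ha hab hbN, iccCycle_apply, swap_apply_def]
  grind

lemma support_blockReversal (hab : a < b) (hbN : b < N) (ha2 : Even a) (hb2 : Even b)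
    (hN2 : Even N) : {x | blockReversal a b N x ≠ x} = Set.Icc 1 N := by
  obtain ⟨p, rfl⟩ := ha2
  obtain ⟨k, rfl⟩ := hb2
  obtain ⟨n, rfl⟩ := hN2
  ext x
  simp only [Set.mem_ofPred_eq, blockReversal_apply hab hbN, Set.mem_Icc]
  split_ifs <;> omega

lemma even_of_blockReversal_apply_ne (hab : a < b) (hbN : b < N)
    (h : ∀ x ∈ Set.Icc 1 N, blockReversal a b N x ≠ x) : Even a ∧ Even b := by
  simp only [blockReversal_apply hab hbN, Set.mem_Icc] at h
  have hmid_left := h ((a + 1) / 2)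
  have hmid_middle := h ((a + 1 + b) / 2)
  constructor <;> by_contra hodd <;> rw [Nat.not_even_iff] at hodd <;>
    split_ifs at hmid_left hmid_middle <;> omega

lemma blockReversal_inj {a' b' : ℕ} (ha : 1 ≤ a) (hab : a < b) (hbN : b < N) (ha' : 1 ≤ a')
    (hab' : a' < b') (hbN' : b' < N) (h : blockReversal a b N = blockReversal a' b' N) :
    a = a' ∧ b = b' := by
  have hfirst := Perm.congr_fun h 1
  have hlast := Perm.congr_fun h N
  simp only [blockReversal_apply hab hbN, blockReversal_apply hab' hbN'] at hfirst hlast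
  split_ifs at hfirst hlast <;> omega

end Reversal

lemma ncard_support_eq_sub {N : ℕ} {f : Perm ℕ} {F : Finset ℕ} (hF : F ⊆ Finset.Icc 1 N)
    (hf : ∀ x, f x ≠ x ↔ x ∈ Finset.Icc 1 N \ F) : {x | f x ≠ x}.ncard = N - F.card := by
  have hsupp : {x | f x ≠ x} = ((Finset.Icc 1 N \ F : Finset ℕ) : Set ℕ) := Set.ext hf
  rw [hsupp, Set.ncard_coe_finset, Finset.card_sdiff_of_subset hF, Nat.card_Icc,
    Nat.add_sub_cancel]

section StandardTuple

variable {n p k : ℕ}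

/-- The normal form of an admissible tuple: `σ∞ = (1 2 … 2n)`, the 3-cycle of `σ1 * τ` is
`2p ↦ 2n ↦ 2k ↦ 2p`, and `τ = (2p 2n)`. -/
def standardTuple (n p k : ℕ) : Perm ℕ × Perm ℕ × Perm ℕ × Perm ℕ :=
  (blockReversal (2 * p) (2 * k) (2 * n), iccCycle (2 * n),
    innerReversal (2 * p) (2 * k) (2 * n) * swap (2 * p) (2 * k), swap (2 * p) (2 * n))

lemma innerReversal_mul_swap_apply_ne_iff (hp : 1 ≤ p) (hpk : p < k) (hkn : k < n) (x : ℕ) :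
    (innerReversal (2 * p) (2 * k) (2 * n) * swap (2 * p) (2 * k)) x ≠ x ↔
      x ∈ Finset.Icc 1 (2 * n) \ {p, p + k, k + n, 2 * n} := by
  rw [innerReversal_mul_swap_apply (by omega) (by omega) (by omega)]
  simp only [Finset.mem_sdiff, Finset.mem_Icc, Finset.mem_insert, Finset.mem_singleton]
  split_ifs <;> omega

lemma innerReversal_apply_ne_iff (hp : 1 ≤ p) (hpk : p < k) (hkn : k < n) (x : ℕ) :
    innerReversal (2 * p) (2 * k) (2 * n) x ≠ x ↔
      x ∈ Finset.Icc 1 (2 * n) \ {p, p + k, k + n, 2 * p, 2 * k, 2 * n} := by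
  rw [innerReversal_apply (by omega) (by omega) (by omega)]
  simp only [Finset.mem_sdiff, Finset.mem_Icc, Finset.mem_insert, Finset.mem_singleton]
  split_ifs <;> omega

lemma ncard_support_innerReversal_mul_swap (hp : 1 ≤ p) (hpk : p < k) (hkn : k < n) :
    {x | (innerReversal (2 * p) (2 * k) (2 * n) * swap (2 * p) (2 * k)) x ≠ x}.ncard =
      2 * (n - 2) := by
  rw [ncard_support_eq_sub _ (innerReversal_mul_swap_apply_ne_iff hp hpk hkn)]
  · have hcard : ({p, p + k, k + n, 2 * n} : Finset ℕ).card = 4 := by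
      grind
    omega
  · intro x
    simp only [Finset.mem_insert, Finset.mem_singleton, Finset.mem_Icc]
    omega

lemma ncard_support_innerReversal (hp : 1 ≤ p) (hpk : p < k) (hkn : k < n) :
    {x | innerReversal (2 * p) (2 * k) (2 * n) x ≠ x}.ncard = 2 * (n - 3) := by
  rw [ncard_support_eq_sub _ (innerReversal_apply_ne_iff hp hpk hkn)]
  · have hcard : ({p, p + k, k + n, 2 * p, 2 * k, 2 * n} : Finset ℕ).card = 6 := by
      grind
    omega
  · intro x
    simp only [Finset.mem_insert, Finset.mem_singleton, Finset.mem_Icc]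
    omega

lemma standardTuple_prod_eq_one (hp : 1 ≤ p) (hpk : p < k) (hkn : k < n) :
    blockReversal (2 * p) (2 * k) (2 * n) * iccCycle (2 * n) *
      (innerReversal (2 * p) (2 * k) (2 * n) * swap (2 * p) (2 * k)) *
        swap (2 * p) (2 * n) = 1 := by
  rw [mul_assoc, mul_assoc, ← blockReversal_eq_iccCycle_mul (by omega) (by omega) (by omega),
    blockReversal_mul_self (by omega) (by omega)]

lemma isAdmissible_standardTuple (hp : 1 ≤ p) (hpk : p < k) (hkn : k < n) :
    IsAdmissible n (standardTuple n p k).1 (standardTuple n p k).2.1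
      (standardTuple n p k).2.2.1 (standardTuple n p k).2.2.2 := by
  refine ⟨standardTuple_prod_eq_one hp hpk hkn, blockReversal_mul_self (by omega) (by omega),
    support_blockReversal (by omega) (by omega) (even_two_mul p) (even_two_mul k) (even_two_mul n),
    isCycle_iccCycle (by omega), support_iccCycle (by omega),
    innerReversal_mul_swap_mul_self (by omega) (by omega) (by omega), fun x hx => ?_,
    ncard_support_innerReversal_mul_swap hp hpk hkn,
    2 * p, 2 * n, by omega, ⟨by omega, by omega⟩, ⟨by omega, le_rfl⟩, rfl⟩
  exact Finset.mem_Icc.1 (Finset.sdiff_subset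
    ((innerReversal_mul_swap_apply_ne_iff hp hpk hkn x).1 hx))

lemma hasThreeCycleType_standardTuple (hp : 1 ≤ p) (hpk : p < k) (hkn : k < n) :
    HasThreeCycleType n ((standardTuple n p k).2.2.1 * (standardTuple n p k).2.2.2) := by
  refine ⟨2 * k, 2 * p, 2 * n, innerReversal (2 * p) (2 * k) (2 * n), by omega, by omega, by omega,
    innerReversal_mul_self (by omega) (by omega) (by omega), fun x hx hmem => hx ?_,
    ncard_support_innerReversal hp hpk hkn, ?_⟩
  · refine innerReversal_apply_eq_self (by omega) (by omega) (by omega) ?_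
    rwa [or_left_comm]
  · rw [swap_comm (2 * k), ← mul_assoc]
    rfl

end StandardTuple

section Classification

variable {N x z : ℕ} {s : Perm ℕ}

namespace HasTriangle

lemma one_le_and_lt (h : HasTriangle ((iccCycle N)⁻¹ * s) x N z)
    (hsupp : {w | s w ≠ w} ⊆ Set.Icc 1 N) : (1 ≤ x ∧ x < N) ∧ (1 ≤ z ∧ z < N) := by
  have hsub : {w | ((iccCycle N)⁻¹ * s) w ≠ w} ⊆ Set.Icc 1 N :=
    (Perm.set_support_mul_subset _ _).trans <| Set.union_subset
      ((Perm.set_support_symm_eq _).trans_subset support_iccCycle_subset) hsupp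
  have hx : x ∈ Set.Icc 1 N := hsub fun e => h.ne_xy (e.symm.trans h.apply_x)
  have hz : z ∈ Set.Icc 1 N := hsub fun e => h.ne_xz (h.apply_z.symm.trans e)
  exact ⟨⟨hx.1, hx.2.lt_of_ne h.ne_xy⟩, ⟨hz.1, hz.2.lt_of_ne h.ne_yz.symm⟩⟩

lemma apply_eq_iccCycle_apply_succ (h : HasTriangle ((iccCycle N)⁻¹ * s) x N z) (hs : s * s = 1)
    {u : ℕ} (hu : 1 ≤ u) (huN : u < N) (hux : u ≠ x) (huz : u ≠ z) :
    s u = iccCycle N (s (u + 1)) := by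
  rw [h.eq_apply_apply_apply hs hux huN.ne huz, iccCycle_apply_of_lt hu huN]

lemma apply_vertices (h : HasTriangle ((iccCycle N)⁻¹ * s) x N z)
    (hsupp : {w | s w ≠ w} ⊆ Set.Icc 1 N) : s x = 1 ∧ s N = z + 1 ∧ s z = x + 1 := by
  obtain ⟨⟨hx, hxN⟩, hz, hzN⟩ := h.one_le_and_lt hsupp
  refine ⟨?_, ?_, ?_⟩
  · rw [Perm.inv_eq_iff_eq.1 h.apply_x, iccCycle_apply_self (by omega)]
  · rw [Perm.inv_eq_iff_eq.1 h.apply_y, iccCycle_apply_of_lt hz hzN]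
  · rw [Perm.inv_eq_iff_eq.1 h.apply_z, iccCycle_apply_of_lt hx hxN]

lemma apply_add_self_eq (h : HasTriangle ((iccCycle N)⁻¹ * s) x N z) (hs : s * s = 1) {w v : ℕ}
    (hw : 1 ≤ w) (hwv : w ≤ v) (hvN : v ≤ N) (hne : ∀ u, w ≤ u → u < v → u ≠ x ∧ u ≠ z)
    (hpos : 1 ≤ s v) (hle : s v + v ≤ N + w) : s w + w = s v + v := by
  induction v, hwv using Nat.le_induction with
  | base => rfl
  | succ v hwv ih =>
    obtain ⟨hvx, hvz⟩ := hne v hwv (by omega)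
    have hv : s v = s (v + 1) + 1 := by
      rw [h.apply_eq_iccCycle_apply_succ hs (by omega) (by omega) hvx hvz,
        iccCycle_apply_of_lt hpos (by omega)]
    rw [ih (by omega) (fun u hwu huv => hne u hwu (by omega)) (by omega) (by omega), hv]
    omega

/-- If `z < x`, then `s` descends on `[1, z]` to the value `x + 1` at `z`. Going back from `z`, it
takes either the value `x + z` at `1 = s x` or the value `N` at some point other than
`z + 1 = s N`, and both contradict that `s` is an involution. -/
lemma lt_of_iccCycle (h : HasTriangle ((iccCycle N)⁻¹ * s) x N z) (hs : s * s = 1)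
    (hsupp : {w | s w ≠ w} ⊆ Set.Icc 1 N) : x < z := by
  obtain ⟨⟨hx, hxN⟩, hz, hzN⟩ := h.one_le_and_lt hsupp
  obtain ⟨hsx, hsN, hsz⟩ := h.apply_vertices hsupp
  have hinv : ∀ w, s (s w) = w := Perm.congr_fun hs
  by_contra! hzx
  have hdesc : ∀ w, 1 ≤ w → w ≤ z → x + 1 + z ≤ N + w → s w + w = x + 1 + z := by
    intro w hw hwz hle
    rw [h.apply_add_self_eq hs hw hwz hzN.le (fun u _ _ => by omega) (by omega) (by omega), hsz]
  rcases le_or_gt (x + z) N with hle | hgt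
  · have hs1 := hdesc 1 le_rfl hz (by omega)
    have hx1 := hinv x
    rw [hsx] at hx1
    omega
  · have hsw := hdesc (x + 1 + z - N) (by omega) (by omega) (by omega)
    have hw := hinv (x + 1 + z - N)
    rw [show s (x + 1 + z - N) = N by omega, hsN] at hw
    omega

lemma eq_blockReversal (h : HasTriangle ((iccCycle N)⁻¹ * s) x N z) (hs : s * s = 1)
    (hsupp : {w | s w ≠ w} ⊆ Set.Icc 1 N) : s = blockReversal x z N := by
  obtain ⟨⟨hx, hxN⟩, hz, hzN⟩ := h.one_le_and_lt hsupp
  obtain ⟨hsx, hsN, hsz⟩ := h.apply_vertices hsupp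
  have hxz := h.lt_of_iccCycle hs hsupp
  ext w
  rw [blockReversal_apply hxz hzN]
  split_ifs with hfirst hmiddle hlast
  · have := h.apply_add_self_eq hs hfirst.1 hfirst.2 hxN.le (fun u _ _ => by omega) (by omega)
      (by omega)
    omega
  · have := h.apply_add_self_eq hs (by omega) hmiddle.2 hzN.le (fun u _ _ => by omega) (by omega)
      (by omega)
    omega
  · have := h.apply_add_self_eq hs (by omega) hlast.2 le_rfl (fun u _ _ => by omega) (by omega)
      (by omega)
    omega
  · by_contra hw
    have := hsupp hw
    rw [Set.mem_Icc] at this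
    omega

/-- The blocks of `s` have even length since the midpoint of an odd block would be fixed. -/
lemma exists_eq_blockReversal {n : ℕ} (h : HasTriangle ((iccCycle (2 * n))⁻¹ * s) x (2 * n) z)
    (hs : s * s = 1) (hsupp : {w | s w ≠ w} = Set.Icc 1 (2 * n)) :
    ∃ p k, 1 ≤ p ∧ p < k ∧ k < n ∧ x = 2 * p ∧ s = blockReversal (2 * p) (2 * k) (2 * n) := by
  obtain ⟨⟨hx, -⟩, -, hz⟩ := h.one_le_and_lt hsupp.subset
  have hxz := h.lt_of_iccCycle hs hsupp.subset
  have hblock := h.eq_blockReversal hs hsupp.subset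
  obtain ⟨⟨p, rfl⟩, k, rfl⟩ := even_of_blockReversal_apply_ne hxz hz fun w hw =>
    hblock ▸ hsupp.superset hw
  refine ⟨p, k, by omega, by omega, by omega, (two_mul p).symm, ?_⟩
  rwa [two_mul p, two_mul k]

end HasTriangle

end Classification

section ConjugacyClasses

variable {n p k p' k' : ℕ} {σ0 σi σ1 τ γ : Perm ℕ}

namespace IsAdmissible

lemma mul_eq_inv_mul (h : IsAdmissible n σ0 σi σ1 τ) : σ1 * τ = σi⁻¹ * σ0 := by
  obtain ⟨hprod, hσ0, -⟩ := h
  rw [mul_assoc, mul_assoc, mul_eq_one_iff_inv_eq, inv_eq_of_mul_eq_one_left hσ0] at hprod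
  rw [hprod, inv_mul_cancel_left]

lemma exists_hasTriangle (h : IsAdmissible n σ0 σi σ1 τ) (hT : HasThreeCycleType n (σ1 * τ)) :
    ∃ x y z, HasTriangle (σi⁻¹ * σ0) x y z ∧ τ = swap x y ∧ y ∈ Set.Icc 1 (2 * n) := by
  obtain ⟨x, y, z, hxyz⟩ := hT.exists_hasTriangle
  have hmul := h.mul_eq_inv_mul
  obtain ⟨-, -, -, -, -, hσ1, -, -, a, b, -, ha, hb, rfl⟩ := h
  obtain ⟨u, v, w, huvw, hab⟩ := hxyz.exists_swap_eq (a := a) (b := b)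
    (by rw [mul_assoc σ1, swap_mul_self, mul_one, hσ1])
  refine ⟨u, v, w, hmul ▸ huvw, hab, ?_⟩
  have hv : v = a ∨ v = b := by
    by_contra! hne
    have := swap_apply_of_ne_of_ne hne.1 hne.2
    rw [hab, swap_apply_right] at this
    exact huvw.ne_xy this
  rcases hv with rfl | rfl <;> assumption

end IsAdmissible

/-- The product of an admissible tuple being `1`, its entry `σ1` is determined by the others. -/
lemma conjTuple_eq_standardTuple (h : IsAdmissible n σ0 σi σ1 τ) (hp : 1 ≤ p) (hpk : p < k)
    (hkn : k < n) (h0 : γ⁻¹ * σ0 * γ = blockReversal (2 * p) (2 * k) (2 * n))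
    (hi : γ⁻¹ * σi * γ = iccCycle (2 * n)) (hτ : γ⁻¹ * τ * γ = swap (2 * p) (2 * n)) :
    conjTuple γ (σ0, σi, σ1, τ) = standardTuple n p k := by
  have h1 : γ⁻¹ * σ1 * γ * (γ⁻¹ * τ * γ) = (γ⁻¹ * σi * γ)⁻¹ * (γ⁻¹ * σ0 * γ) := by
    rw [show γ⁻¹ * σ1 * γ * (γ⁻¹ * τ * γ) = γ⁻¹ * (σ1 * τ) * γ by group, h.mul_eq_inv_mul]
    group
  have h1_standard := (isAdmissible_standardTuple hp hpk hkn).mul_eq_inv_mul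
  rw [h0, hi, hτ] at h1
  exact Prod.ext h0 (Prod.ext hi (Prod.ext (mul_right_cancel (h1.trans h1_standard.symm)) hτ))

lemma exists_conjClass_eq_standardTuple (h : IsAdmissible n σ0 σi σ1 τ)
    (hT : HasThreeCycleType n (σ1 * τ)) :
    ∃ p k, 1 ≤ p ∧ p < k ∧ k < n ∧ conjClass (Set.Icc 1 (2 * n)) (σ0, σi, σ1, τ) =
      conjClass (Set.Icc 1 (2 * n)) (standardTuple n p k) := by
  obtain ⟨x, y, z, hxyz, rfl, hy⟩ := h.exists_hasTriangle hT
  have hN : 2 ≤ 2 * n := by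
    rw [Set.mem_Icc] at hy
    omega
  obtain ⟨-, hσ0, hσ0supp, hσi, hσisupp, -⟩ := id h
  obtain ⟨γ, hγ, hγσi, hγy⟩ := exists_conj_eq_of_isCycle_of_apply_eq (Set.finite_Icc 1 (2 * n))
    hσi (isCycle_iccCycle hN) hσisupp (support_iccCycle hN) (a := 2 * n) ⟨by omega, le_rfl⟩ hy
  have hγy' : γ⁻¹ y = 2 * n := Perm.inv_eq_iff_eq.2 hγy.symm
  have hs : γ⁻¹ * σ0 * γ * (γ⁻¹ * σ0 * γ) = 1 := by
    rw [show γ⁻¹ * σ0 * γ * (γ⁻¹ * σ0 * γ) = γ⁻¹ * (σ0 * σ0) * γ by group, hσ0]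
    group
  have htri : HasTriangle ((iccCycle (2 * n))⁻¹ * (γ⁻¹ * σ0 * γ)) (γ⁻¹ x) (2 * n) (γ⁻¹ z) := by
    rw [← hγσi, ← hγy',
      show (γ⁻¹ * σi * γ)⁻¹ * (γ⁻¹ * σ0 * γ) = γ⁻¹ * (σi⁻¹ * σ0) * γ by group]
    exact hxyz.conj γ
  obtain ⟨p, k, hp, hpk, hkn, hx, hblock⟩ :=
    htri.exists_eq_blockReversal hs (support_conj_eq hγ hσ0supp)
  have hτ : γ⁻¹ * swap x y * γ = swap (2 * p) (2 * n) := by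
    rw [← hx, ← hγy', swap_apply_apply, inv_inv]
  refine ⟨p, k, hp, hpk, hkn, ?_⟩
  rw [← conjClass_conjTuple hγ, conjTuple_eq_standardTuple h hp hpk hkn hblock hγσi hτ]

/-- The point `2n` is the only one moved by `τ = (2p 2n)` and fixed by `σ1`. -/
lemma eq_one_of_conjTuple_standardTuple_eq (hp : 1 ≤ p) (hpk : p < k) (hkn : k < n) (hp' : 1 ≤ p')
    (hpk' : p' < k') (hkn' : k' < n) (hγ : {x | γ x ≠ x} ⊆ Set.Icc 1 (2 * n))
    (h : conjTuple γ (standardTuple n p k) = standardTuple n p' k') : γ = 1 := by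
  have hN : 2 ≤ 2 * n := by omega
  simp only [conjTuple, standardTuple, Prod.mk.injEq] at h
  obtain ⟨-, hi, h1, hτ⟩ := h
  have hcomm : Commute γ (iccCycle (2 * n)) := by
    rw [mul_assoc, inv_mul_eq_iff_eq_mul] at hi
    exact hi.symm
  have hfix : (innerReversal (2 * p) (2 * k) (2 * n) * swap (2 * p) (2 * k)) (γ (2 * n)) =
      γ (2 * n) := by
    have hfix' : (innerReversal (2 * p') (2 * k') (2 * n) * swap (2 * p') (2 * k')) (2 * n) =
        2 * n := by
      rw [innerReversal_mul_swap_apply (by omega) (by omega) (by omega)]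
      split_ifs <;> omega
    have := Perm.congr_fun h1 (2 * n)
    rwa [hfix', mul_assoc, Perm.mul_apply, Perm.inv_eq_iff_eq, Perm.mul_apply _ γ] at this
  have hmove : swap (2 * p) (2 * n) (γ (2 * n)) ≠ γ (2 * n) := by
    have := Perm.congr_fun hτ (2 * n)
    rw [swap_apply_right, mul_assoc, Perm.mul_apply, Perm.inv_eq_iff_eq, Perm.mul_apply] at this
    rw [this]
    exact γ.injective.ne (by omega)
  have hγN : γ (2 * n) = 2 * n := by
    rw [innerReversal_mul_swap_apply (by omega) (by omega) (by omega)] at hfix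
    rw [swap_apply_def] at hmove
    split_ifs at hfix hmove <;> omega
  exact eq_one_of_commute_of_isCycleOn (support_iccCycle hN ▸ (isCycle_iccCycle hN).isCycleOn)
    hcomm hγ (a := 2 * n) ⟨by omega, le_rfl⟩ hγN

lemma eq_of_conjClass_standardTuple_eq (hp : 1 ≤ p) (hpk : p < k) (hkn : k < n) (hp' : 1 ≤ p')
    (hpk' : p' < k') (hkn' : k' < n)
    (h : conjClass (Set.Icc 1 (2 * n)) (standardTuple n p k) =
      conjClass (Set.Icc 1 (2 * n)) (standardTuple n p' k')) : p = p' ∧ k = k' := by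
  obtain ⟨γ, hγ, heq⟩ := h.superset self_mem_conjClass
  rw [eq_one_of_conjTuple_standardTuple_eq hp hpk hkn hp' hpk' hkn' hγ heq.symm,
    conjTuple_one] at heq
  have := blockReversal_inj (by omega) (by omega) (by omega) (by omega) (by omega) (by omega)
    (congrArg Prod.fst heq)
  omega

end ConjugacyClasses

section Count

variable {n : ℕ}

/-- The pairs `(k, p)` with `1 ≤ p < k < n`, which index the standard tuples `standardTuple n p k`.
They are ordered by `k` first so that the set is a disjoint union over `k`. -/
def standardIndices (n : ℕ) : Finset (Σ _ : ℕ, ℕ) :=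
  (Finset.range n).sigma fun k => Finset.Ico 1 k

lemma mem_standardIndices {i : Σ _ : ℕ, ℕ} :
    i ∈ standardIndices n ↔ 1 ≤ i.2 ∧ i.2 < i.1 ∧ i.1 < n := by
  simp only [standardIndices, Finset.mem_sigma, Finset.mem_range, Finset.mem_Ico]
  tauto

lemma card_standardIndices (n : ℕ) : (standardIndices n).card = (n - 1) * (n - 2) / 2 := by
  simp only [standardIndices, Finset.card_sigma, Nat.card_Ico]
  cases n with
  | zero => rfl
  | succ m =>
    simp only [Finset.sum_range_succ', Nat.add_sub_cancel]
    exact Finset.sum_range_id m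

/-- The class of the standard tuple of index `i = (k, p)`. -/
def standardClass (n : ℕ) (i : Σ _ : ℕ, ℕ) : Set (Perm ℕ × Perm ℕ × Perm ℕ × Perm ℕ) :=
  conjClass (Set.Icc 1 (2 * n)) (standardTuple n i.2 i.1)

lemma injOn_standardClass : Set.InjOn (standardClass n) (standardIndices n) := by
  rintro ⟨k, p⟩ hi ⟨k', p'⟩ hi' heq
  obtain ⟨hp, hpk, hkn⟩ := mem_standardIndices.1 hi
  obtain ⟨hp', hpk', hkn'⟩ := mem_standardIndices.1 hi'
  obtain ⟨rfl, rfl⟩ := eq_of_conjClass_standardTuple_eq hp hpk hkn hp' hpk' hkn' heq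
  rfl

lemma setOf_conjClass_eq_image (n : ℕ) :
    {C | ∃ σ0 σi σ1 τ : Perm ℕ, IsAdmissible n σ0 σi σ1 τ ∧ HasThreeCycleType n (σ1 * τ) ∧
      C = conjClass (Set.Icc 1 (2 * n)) (σ0, σi, σ1, τ)} =
    standardClass n '' standardIndices n := by
  ext C
  constructor
  · rintro ⟨σ0, σi, σ1, τ, hadm, hT, rfl⟩
    obtain ⟨p, k, hp, hpk, hkn, heq⟩ := exists_conjClass_eq_standardTuple hadm hT
    exact ⟨⟨k, p⟩, mem_standardIndices.2 ⟨hp, hpk, hkn⟩, heq.symm⟩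
  · rintro ⟨⟨k, p⟩, hi, rfl⟩
    obtain ⟨hp, hpk, hkn⟩ := mem_standardIndices.1 hi
    exact ⟨_, _, _, _, isAdmissible_standardTuple hp hpk hkn,
      hasThreeCycleType_standardTuple hp hpk hkn, rfl⟩

end Count

end

theorem stmt18 (n : ℕ) (hn : 3 ≤ n) :
    {C : Set (Equiv.Perm ℕ × Equiv.Perm ℕ × Equiv.Perm ℕ × Equiv.Perm ℕ) |
      ∃ σ0 σi σ1 τ : Equiv.Perm ℕ, IsAdmissible n σ0 σi σ1 τ ∧
        HasThreeCycleType n (σ1 * τ) ∧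
        C = {p | ∃ γ : Equiv.Perm ℕ, {x | γ x ≠ x} ⊆ Set.Icc 1 (2*n) ∧
          p = (γ⁻¹ * σ0 * γ, γ⁻¹ * σi * γ, γ⁻¹ * σ1 * γ, γ⁻¹ * τ * γ)}}.ncard
      = (n-1)*(n-2)/2 := by
  calc
    _ = (standardClass n '' standardIndices n).ncard :=
      congrArg Set.ncard (setOf_conjClass_eq_image n)
    _ = (standardIndices n).card := by
      rw [injOn_standardClass.ncard_image, Set.ncard_coe_finset]
    _ = (n - 1) * (n - 2) / 2 := card_standardIndices n
end
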